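/- arXiv:1110.6140 — 3 statements merged into one kernel-verified Lean document; each statement's English description precedes it below -/
import Mathlib

section
/- There exists a nonempty Π⁰₁ closed subset Q of [0,1]² ⊆ ℝ² such that the subspace Q is contractible and Q contains no computable point. -/
open Set Metric

section TopDefs

variable {α : Type*} [TopologicalSpace α]

/-- `A ⊆ α` is an arc with endpoints `x` and `y`:
a homeomorphic (continuous injective) image of `[0,1]` sending `0 ↦ x`, `1 ↦ y`. -/
def IsArc (A : Set α) (x y : α) : Prop :=
  ∃ f : Set.Icc (0:ℝ) 1 → α, Continuous f ∧ Function.Injective f ∧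
    Set.range f = A ∧ f ⟨0, by norm_num⟩ = x ∧ f ⟨1, by norm_num⟩ = y

/-- A continuum: a nonempty compact connected set. -/
def IsContinuum (X : Set α) : Prop := IsCompact X ∧ IsConnected X

/-- Any two distinct points of `X` are endpoints of an arc contained in `X`. -/
def ArcwiseConnectedSet (X : Set α) : Prop :=
  ∀ x ∈ X, ∀ y ∈ X, x ≠ y → ∃ A, A ⊆ X ∧ IsArc A x y

/-- `X` is unicoherent: for all closed connected `A, B ⊆ X` with `A ∪ B = X`,
the intersection `A ∩ B` is connected. -/
def UnicoherentSet (X : Set α) : Prop :=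
  ∀ A B : Set α, A ⊆ X → B ⊆ X → IsClosed A → IsClosed B →
    IsConnected A → IsConnected B → A ∪ B = X → IsConnected (A ∩ B)

/-- Every subcontinuum of `X` is unicoherent. -/
def HereditarilyUnicoherent (X : Set α) : Prop :=
  ∀ Y, Y ⊆ X → IsContinuum Y → UnicoherentSet Y

/-- A dendroid: an arcwise connected, hereditarily unicoherent continuum. -/
def IsDendroid (X : Set α) : Prop :=
  IsContinuum X ∧ ArcwiseConnectedSet X ∧ HereditarilyUnicoherent X

/-- The unit circle `S¹`. -/
def unitCircle : Set (EuclideanSpace ℝ (Fin 2)) := Metric.sphere 0 1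

/-- A dendrite: a locally connected continuum containing no subset homeomorphic to `S¹`. -/
def IsDendrite (X : Set α) : Prop :=
  IsContinuum X ∧ LocallyConnectedSpace ↥X ∧
    ∀ S : Set α, S ⊆ X → IsEmpty (↥S ≃ₜ ↥unitCircle)

/-- `x` and `y` lie in the same arc-component of `Y`. -/
def SameArcComponent (Y : Set α) (x y : α) : Prop :=
  x = y ∨ ∃ A, A ⊆ Y ∧ IsArc A x y

/-- `x` is a ramification point of `X`: `X \ {x}` has at least three arc-components. -/
def IsRamificationPoint (X : Set α) (x : α) : Prop :=
  x ∈ X ∧ ∃ u v w, u ∈ X \ {x} ∧ v ∈ X \ {x} ∧ w ∈ X \ {x} ∧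
    ¬ SameArcComponent (X \ {x}) u v ∧ ¬ SameArcComponent (X \ {x}) u w ∧
    ¬ SameArcComponent (X \ {x}) v w

/-- A tree (as a continuum): a dendrite with finitely many ramification points. -/
def IsTreeContinuum (X : Set α) : Prop :=
  IsDendrite X ∧ {x | IsRamificationPoint X x}.Finite

end TopDefs

section CompDefs

/-- The rational open ball in `ℝ²` coded by `((q₁, q₂), r)`. -/
def ballOfCode (c : (ℚ × ℚ) × ℚ) : Set (ℝ × ℝ) :=
  {x | dist x (((c.1.1 : ℝ), (c.1.2 : ℝ)) : ℝ × ℝ) < (c.2 : ℝ)}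

/-- A closed set `F ⊆ ℝ²` is `Π⁰₁` if it is the complement of the union of the rational
open balls coded by some c.e. set of codes. -/
def IsPi01Closed (F : Set (ℝ × ℝ)) : Prop :=
  ∃ W : (ℚ × ℚ) × ℚ → Prop, REPred W ∧ F = Set.univ \ ⋃ c ∈ {c | W c}, ballOfCode c

/-- `F ⊆ ℝ²` is c.e. closed if the set of codes of rational open balls meeting `F` is c.e. -/
def IsCEClosed (F : Set (ℝ × ℝ)) : Prop :=
  REPred (fun c : (ℚ × ℚ) × ℚ => (F ∩ ballOfCode c).Nonempty)

/-- A computable closed subset of `ℝ²`: both `Π⁰₁` and c.e. closed. -/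
def IsComputableClosed (F : Set (ℝ × ℝ)) : Prop :=
  IsPi01Closed F ∧ IsCEClosed F

/-- A point of `ℝ²` is computable if the set of codes of rational open balls
containing it is c.e. -/
def IsComputablePoint (x : ℝ × ℝ) : Prop :=
  REPred (fun c : (ℚ × ℚ) × ℚ => x ∈ ballOfCode c)

end CompDefs

section PsiDefs

/-- A tree of binary strings: a set of finite binary strings closed under prefixes. -/
def IsTreeOfStrings (T : Set (List Bool)) : Prop :=
  ∀ σ ∈ T, ∀ τ : List Bool, τ <+: σ → τ ∈ T

/-- The point `ψ(σ) ∈ ℝ²` associated with the binary string `σ`. -/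
noncomputable def psiPt (σ : List Bool) : ℝ × ℝ :=
  ((3:ℝ) ^ (-(σ.length : ℤ)) / 2 +
      2 * ∑ i ∈ Finset.range σ.length,
        (if σ.getD i false then (3:ℝ) ^ (-((i : ℤ) + 1)) else 0),
    (2:ℝ) ^ (-(σ.length : ℤ)))

/-- The planar embedding `Ψ(T)` of a tree `T` of binary strings: the closure of the union
of the segments from `ψ(σ⁻)` to `ψ(σ)` over nonempty `σ ∈ T` (together with the points
`ψ(σ)`, `σ ∈ T`, which makes no difference except for the degenerate trees `∅`, `{⟨⟩}`). -/
noncomputable def PsiSet (T : Set (List Bool)) : Set (ℝ × ℝ) :=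
  closure (psiPt '' T ∪ ⋃ σ ∈ T, ⋃ (_ : σ ≠ []), segment ℝ (psiPt σ.dropLast) (psiPt σ))

end PsiDefs

namespace Fan

section Toolkit

open Nat.Partrec (Code)
open Encodable Computable

variable {α β γ : Type*} [Primcodable α] [Primcodable β] [Primcodable γ]

theorem re_iff_exists_computable {p : α → Prop} (hp : REPred p) :
    ∃ f : α → ℕ → Bool, Computable₂ f ∧ ∀ a, p a ↔ ∃ n, f a n = true := by
  have h : Nat.Partrec _ := hp
  obtain ⟨c, hc⟩ := Nat.Partrec.Code.exists_code.1 h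
  refine ⟨fun a n => (Code.evaln n c (encode a)).isSome, ?_, ?_⟩
  · have h1 : Primrec fun x : α × ℕ => ((x.2, c), encode x.1) :=
      Primrec.pair (Primrec.pair Primrec.snd (Primrec.const c)) (Primrec.encode.comp Primrec.fst)
    exact (Primrec.option_isSome.comp (Code.primrec_evaln.comp h1)).to_comp
  · intro a
    have h2 : (Code.eval c (encode a)).Dom ↔ p a := by
      rw [hc]; simp [Part.assert]
    rw [← h2, Part.dom_iff_mem]
    constructor
    · rintro ⟨y, hy⟩
      obtain ⟨k, hk⟩ := Code.evaln_complete.1 hy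
      exact ⟨k, by simp [Option.mem_def.1 hk]⟩
    · rintro ⟨n, hn⟩
      obtain ⟨y, hy⟩ := Option.isSome_iff_exists.1 hn
      exact ⟨y, Code.evaln_sound hy⟩

theorem re_of_exists_nat {f : α → ℕ → Bool} (hf : Computable₂ f) :
    REPred fun a => ∃ n, f a n = true := by
  have h : Partrec fun a => Nat.rfind fun n => Part.some (f a n) :=
    Partrec.rfind hf.partrec₂
  refine h.dom_re.of_eq fun a => ?_
  refine Nat.rfind_dom'.trans ?_
  constructor
  · rintro ⟨n, hn, -⟩
    exact ⟨n, (Part.mem_some_iff.1 hn).symm⟩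
  · rintro ⟨n, hn⟩
    exact ⟨n, by simp [hn], fun _ => trivial⟩

theorem re_exists {R : α → β → Prop} (h : REPred fun p : α × β => R p.1 p.2) :
    REPred fun a => ∃ b, R a b := by
  obtain ⟨f, hf, hfe⟩ := re_iff_exists_computable h
  have h2 : Computable₂ fun (a : α) (n : ℕ) =>
      (((decode n.unpair.1 : Option β).map fun b => f (a, b) n.unpair.2).getD false) := by
    refine Computable.option_getD (Computable.option_map ?_ ?_) (Computable.const false)
    · exact Computable.decode.comp (Computable.fst.comp (Computable.unpair.comp Computable.snd))
    · refine hf.comp (Computable.pair (Computable.fst.comp Computable.fst) Computable.snd)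
        (Computable.snd.comp (Computable.unpair.comp (Computable.snd.comp Computable.fst)))
  refine (re_of_exists_nat h2).of_eq fun a => ?_
  constructor
  · rintro ⟨n, hn⟩
    cases hd : (decode n.unpair.1 : Option β) with
    | none => simp [hd] at hn
    | some b => exact ⟨b, (hfe (a, b)).2 ⟨n.unpair.2, by simpa [hd] using hn⟩⟩
  · rintro ⟨b, hb⟩
    obtain ⟨m, hm⟩ := (hfe (a, b)).1 hb
    exact ⟨Nat.pair (encode b) m, by simpa using hm⟩

theorem re_comp {p : β → Prop} (hp : REPred p) {f : α → β} (hf : Computable f) :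
    REPred fun a => p (f a) := Partrec.comp hp hf

theorem re_and {p q : α → Prop} (hp : REPred p) (hq : REPred q) :
    REPred fun a => p a ∧ q a := by
  have h := Partrec.bind hp (g := fun a (_ : Unit) => Part.assert (q a) fun _ => Part.some ())
    (Partrec.comp hq Computable.fst)
  refine h.dom_re.of_eq fun a => ?_
  simp [Part.assert]

/-- a total function with r.e. graph is computable -/
theorem computable_of_re_graph {f : α → β} (h : REPred fun p : α × β => f p.1 = p.2) :
    Computable f := by
  obtain ⟨F, hF, hFe⟩ := re_iff_exists_computable h
  have h2 : Computable₂ fun (a : α) (n : ℕ) =>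
      (decode n.unpair.1 : Option β).bind fun b => bif F (a, b) n.unpair.2 then some b else none := by
    refine Computable.option_bind ?_ ?_
    · exact Computable.decode.comp (Computable.fst.comp (Computable.unpair.comp Computable.snd))
    · refine Computable.cond ?_ (Computable.option_some.comp Computable.snd) (Computable.const none)
      refine hF.comp (Computable.pair (Computable.fst.comp Computable.fst) Computable.snd)
        (Computable.snd.comp (Computable.unpair.comp (Computable.snd.comp Computable.fst)))
  have key : ∀ (a : α) (b : β) (n : ℕ), b ∈ ((decode n.unpair.1 : Option β).bind fun b =>
      bif F (a, b) n.unpair.2 then some b else none) → b = f a := by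
    intro a b n hb
    simp only [Option.mem_def, Option.bind_eq_some_iff] at hb
    obtain ⟨b', h1, h2⟩ := hb
    cases hF' : F (a, b') n.unpair.2 with
    | false => simp [hF'] at h2
    | true =>
      simp only [hF', cond_true, Option.some.injEq] at h2
      subst h2
      exact ((hFe (a, b')).2 ⟨_, hF'⟩).symm
  refine (Partrec.rfindOpt h2).of_eq_tot fun a => ?_
  have hd : (Nat.rfindOpt fun n => (decode n.unpair.1 : Option β).bind fun b =>
      bif F (a, b) n.unpair.2 then some b else none).Dom := by
    rw [Nat.rfindOpt_dom]
    obtain ⟨m, hm⟩ := (hFe (a, f a)).1 rfl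
    refine ⟨Nat.pair (encode (f a)) m, f a, ?_⟩
    simp [hm]
  obtain ⟨b, hb⟩ := Part.dom_iff_mem.1 hd
  obtain ⟨n, hn⟩ := Nat.rfindOpt_spec hb
  rw [key a b n hn] at hb
  exact hb

theorem cp_iff {p : α → Prop} [DecidablePred p] :
    ComputablePred p ↔ Computable fun a => decide (p a) :=
  ⟨fun h => h.decide, fun h => h.computablePred⟩

theorem cp_comp {p : β → Prop} (hp : ComputablePred p) {f : α → β} (hf : Computable f) :
    ComputablePred fun a => p (f a) := by
  classical
  rw [cp_iff] at *
  exact hp.comp hf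

theorem cp_and {p q : α → Prop} (hp : ComputablePred p) (hq : ComputablePred q) :
    ComputablePred fun a => p a ∧ q a := by
  classical
  rw [cp_iff] at *
  exact (Primrec.and.to_comp.comp hp hq).of_eq fun a => by simp

theorem cp_or {p q : α → Prop} (hp : ComputablePred p) (hq : ComputablePred q) :
    ComputablePred fun a => p a ∨ q a := by
  classical
  rw [cp_iff] at *
  exact (Primrec.or.to_comp.comp hp hq).of_eq fun a => by simp

theorem cp_imp {p q : α → Prop} (hp : ComputablePred p) (hq : ComputablePred q) :
    ComputablePred fun a => p a → q a :=
  (cp_or hp.not hq).of_eq fun a => by tauto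

theorem cp_ite {p : α → Prop} [DecidablePred p] (hp : ComputablePred p) {f g : α → β}
    (hf : Computable f) (hg : Computable g) : Computable fun a => if p a then f a else g a :=
  (Computable.cond hp.decide hf hg).of_eq fun a => by by_cases h : p a <;> simp [h]

theorem cp_forall_lt {P : α → ℕ → Prop} {b : α → ℕ} (hb : Computable b)
    (hP : ComputablePred fun x : α × ℕ => P x.1 x.2) :
    ComputablePred fun a => ∀ i < b a, P a i := by
  classical
  rw [cp_iff] at *
  have h := Computable.nat_rec (f := b) (g := fun _ : α => true)
    (h := fun a (x : ℕ × Bool) => x.2 && decide (P a x.1)) hb (Computable.const true)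
    (Primrec.and.to_comp.comp (Computable.snd.comp Computable.snd)
      (hP.comp (Computable.pair Computable.fst (Computable.fst.comp Computable.snd))))
  refine h.of_eq fun a => ?_
  generalize b a = n
  induction n with
  | zero => simp
  | succ n ih =>
    simp only [ih]
    rw [Bool.eq_iff_iff]
    simp only [Bool.and_eq_true, decide_eq_true_eq, Nat.lt_succ_iff_lt_or_eq, or_imp, forall_and,
      forall_eq]

theorem cp_exists_lt {P : α → ℕ → Prop} {b : α → ℕ} (hb : Computable b)
    (hP : ComputablePred fun x : α × ℕ => P x.1 x.2) :
    ComputablePred fun a => ∃ i < b a, P a i :=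
  (cp_forall_lt (P := fun a i => ¬ P a i) hb hP.not).not.of_eq fun a => by
    push Not; rfl

theorem cp_eq_nat {f g : α → ℕ} (hf : Computable f) (hg : Computable g) :
    ComputablePred fun a => f a = g a :=
  cp_comp (p := fun x : ℕ × ℕ => x.1 = x.2) (PrimrecPred.computablePred Primrec.eq) (hf.pair hg)

theorem cp_eq_bool {f g : α → Bool} (hf : Computable f) (hg : Computable g) :
    ComputablePred fun a => f a = g a :=
  cp_comp (p := fun x : Bool × Bool => x.1 = x.2) (PrimrecPred.computablePred Primrec.eq)
    (hf.pair hg)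

theorem cp_le_nat {f g : α → ℕ} (hf : Computable f) (hg : Computable g) :
    ComputablePred fun a => f a ≤ g a :=
  cp_comp (p := fun x : ℕ × ℕ => x.1 ≤ x.2) (PrimrecPred.computablePred Primrec.nat_le)
    (hf.pair hg)

theorem cp_lt_nat {f g : α → ℕ} (hf : Computable f) (hg : Computable g) :
    ComputablePred fun a => f a < g a :=
  cp_comp (p := fun x : ℕ × ℕ => x.1 < x.2) (PrimrecPred.computablePred Primrec.nat_lt)
    (hf.pair hg)

theorem c_add {f g : α → ℕ} (hf : Computable f) (hg : Computable g) :
    Computable fun a => f a + g a := Primrec.nat_add.to_comp.comp hf hg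
theorem c_mul {f g : α → ℕ} (hf : Computable f) (hg : Computable g) :
    Computable fun a => f a * g a := Primrec.nat_mul.to_comp.comp hf hg
theorem c_div {f g : α → ℕ} (hf : Computable f) (hg : Computable g) :
    Computable fun a => f a / g a := Primrec.nat_div.to_comp.comp hf hg
theorem c_mod {f g : α → ℕ} (hf : Computable f) (hg : Computable g) :
    Computable fun a => f a % g a := Primrec.nat_mod.to_comp.comp hf hg
theorem c_pow {f g : α → ℕ} (hf : Computable f) (hg : Computable g) :
    Computable fun a => f a ^ g a := (Primrec₂.unpaired'.1 Nat.Primrec.pow).to_comp.comp hf hg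

theorem c_testBit {f g : α → ℕ} (hf : Computable f) (hg : Computable g) :
    Computable fun a => Nat.testBit (f a) (g a) := by
  have h := (cp_eq_nat (c_mod (c_div hf (c_pow (Computable.const 2) hg)) (Computable.const 2))
    (Computable.const 1)).decide
  exact h.of_eq fun a => by rw [Nat.testBit_eq_decide_div_mod_eq]

end Toolkit

section RatComp

open Encodable Denumerable

/-- positive and negative part of the numerator -/
def rP (q : ℚ) : ℕ := q.num.toNat
def rN (q : ℚ) : ℕ := (-q.num).toNat

/-- decoding of the naive code of a rational -/
def cP (m : ℕ) : ℕ := if m.unpair.1 % 2 = 0 then m.unpair.1 / 2 else 0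
def cN (m : ℕ) : ℕ := if m.unpair.1 % 2 = 0 then 0 else m.unpair.1 / 2 + 1
def cD (m : ℕ) : ℕ := m.unpair.2

def oldEncode (q : ℚ) : ℕ := @encode ℚ Rat.instEncodable q

theorem old_eq (q : ℚ) : oldEncode q = Nat.pair (encode q.num) q.den := rfl

theorem int_enc_nonneg (n : ℕ) : encode (n : ℤ) = 2 * n := rfl
theorem int_enc_neg (n : ℕ) : encode (Int.negSucc n) = 2 * n + 1 := rfl

theorem int_enc_P (z : ℤ) :
    (if encode z % 2 = 0 then encode z / 2 else 0) = z.toNat := by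
  rcases z with n | n
  · have h : encode (Int.ofNat n) = 2 * n := rfl
    rw [if_pos (by omega), h]; simp
  · have h : encode (Int.negSucc n) = 2 * n + 1 := rfl
    rw [if_neg (by omega)]; simp
theorem int_enc_N (z : ℤ) :
    (if encode z % 2 = 0 then 0 else encode z / 2 + 1) = (-z).toNat := by
  rcases z with n | n
  · have h : encode (Int.ofNat n) = 2 * n := rfl
    rw [if_pos (by omega)]; simp
  · have h : encode (Int.negSucc n) = 2 * n + 1 := rfl
    rw [if_neg (by omega), h, Int.neg_negSucc]; simp; omega

theorem cP_old (q : ℚ) : cP (oldEncode q) = rP q := by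
  rw [old_eq, cP, rP, Nat.unpair_pair, int_enc_P]
theorem cN_old (q : ℚ) : cN (oldEncode q) = rN q := by
  rw [old_eq, cN, rN, Nat.unpair_pair, int_enc_N]
theorem cD_old (q : ℚ) : cD (oldEncode q) = q.den := by
  rw [old_eq, cD, Nat.unpair_pair]

theorem encode_cP_cN (a : ℕ) : ∃ z : ℤ, encode z = a := ⟨Denumerable.ofNat ℤ a, Denumerable.encode_ofNat a⟩

/-- the set of old codes -/
theorem old_range (m : ℕ) : (∃ q, oldEncode q = m) ↔ 0 < cD m ∧ (cP m + cN m).Coprime (cD m) := by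
  constructor
  · rintro ⟨q, rfl⟩
    rw [cP_old, cN_old, cD_old]
    refine ⟨q.pos, ?_⟩
    have : rP q + rN q = q.num.natAbs := by unfold rP rN; omega
    rw [this]; exact q.reduced
  · rintro ⟨h1, h2⟩
    obtain ⟨z, hz⟩ := encode_cP_cN m.unpair.1
    have hm : m = Nat.pair (encode z) (cD m) := by rw [hz, cD, Nat.pair_unpair]
    have hz2 : cP m + cN m = z.natAbs := by
      rw [cP, cN, ← hz]
      rw [int_enc_P, int_enc_N]; omega
    refine ⟨⟨z, cD m, h1.ne', hz2 ▸ h2⟩, ?_⟩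
    rw [old_eq]; exact hm.symm

theorem old_inj : Function.Injective oldEncode := @encode_injective ℚ Rat.instEncodable

/-- the old code of the `n`th rational -/
def oldF (n : ℕ) : ℕ := oldEncode (ofNat ℚ n)

instance infOld : Infinite (Set.range oldEncode) :=
  Infinite.of_injective _ (Equiv.ofInjective _ old_inj).injective

theorem oldF_eq (n : ℕ) : oldF n = @Nat.Subtype.ofNat (Set.range oldEncode)
    (@decidableRangeEncode ℚ Rat.instEncodable) infOld n := by
  have h : ofNat ℚ n = (@equivRangeEncode ℚ Rat.instEncodable).symm
    (@Nat.Subtype.ofNat (Set.range oldEncode)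
    (@decidableRangeEncode ℚ Rat.instEncodable) infOld n) := rfl
  rw [oldF, h]
  have := (@equivRangeEncode ℚ Rat.instEncodable).apply_symm_apply (@Nat.Subtype.ofNat (Set.range oldEncode)
    (@decidableRangeEncode ℚ Rat.instEncodable) infOld n)
  exact congrArg Subtype.val this

theorem oldF_mono : StrictMono oldF := by
  refine strictMono_nat_of_lt_succ fun n => ?_
  rw [oldF_eq, oldF_eq]
  exact @Nat.Subtype.lt_succ_self _ infOld (@decidableRangeEncode ℚ Rat.instEncodable) _

theorem oldF_range (m : ℕ) : (∃ q, oldEncode q = m) ↔ ∃ n, oldF n = m := by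
  constructor
  · rintro ⟨q, rfl⟩
    exact ⟨@encode ℚ Denumerable.toEncodable q, by rw [oldF, Denumerable.ofNat_encode]⟩
  · rintro ⟨n, rfl⟩
    exact ⟨_, rfl⟩

theorem c_cD : Computable cD := Computable.snd.comp Computable.unpair
theorem c_cP : Computable cP :=
  cp_ite (cp_eq_nat (c_mod (Computable.fst.comp Computable.unpair) (Computable.const 2))
    (Computable.const 0)) (c_div (Computable.fst.comp Computable.unpair) (Computable.const 2))
    (Computable.const 0)
theorem c_cN : Computable cN :=
  cp_ite (cp_eq_nat (c_mod (Computable.fst.comp Computable.unpair) (Computable.const 2))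
    (Computable.const 0)) (Computable.const 0)
    (c_add (c_div (Computable.fst.comp Computable.unpair) (Computable.const 2))
      (Computable.const 1))

theorem cp_isOld : ComputablePred fun m : ℕ => ∃ q, oldEncode q = m := by
  have h1 : ComputablePred fun m : ℕ => 0 < cD m ∧ ∀ k < cD m + 1,
      (cP m + cN m) % k = 0 → cD m % k = 0 → k = 1 := by
    refine cp_and (cp_lt_nat (Computable.const 0) c_cD) (cp_forall_lt
      (c_add c_cD (Computable.const 1)) (cp_imp (cp_eq_nat (c_mod ?_ Computable.snd)
        (Computable.const 0)) (cp_imp (cp_eq_nat (c_mod ?_ Computable.snd)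
        (Computable.const 0)) (cp_eq_nat Computable.snd (Computable.const 1)))))
    · exact c_add (c_cP.comp Computable.fst) (c_cN.comp Computable.fst)
    · exact c_cD.comp Computable.fst
  refine h1.of_eq fun m => ?_
  rw [old_range]
  refine and_congr_right fun h0 => ?_
  constructor
  · intro h
    refine Nat.Coprime.symm (Nat.coprime_of_dvd' ?_)
    intro k hk hk1 hk2
    have := h k (Nat.lt_succ_of_le (Nat.le_of_dvd h0 hk1)) (Nat.mod_eq_zero_of_dvd hk2)
      (Nat.mod_eq_zero_of_dvd hk1)
    exact (hk.ne_one this).elim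
  · intro h k _ h1 h2
    exact Nat.eq_one_of_dvd_coprimes h (Nat.dvd_of_mod_eq_zero h1) (Nat.dvd_of_mod_eq_zero h2)

theorem nextOld_ex (m : ℕ) : ∃ k, m ≤ k ∧ ∃ q, oldEncode q = k :=
  ⟨oldF m, oldF_mono.le_apply, (oldF_range _).2 ⟨m, rfl⟩⟩

theorem c_oldF : Computable oldF := by
  classical
  have h1 : ComputablePred fun p : ℕ × ℕ => p.1 ≤ p.2 ∧ ∃ q, oldEncode q = p.2 :=
    cp_and (cp_le_nat Computable.fst Computable.snd) (cp_comp cp_isOld Computable.snd)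
  have h2 := Computable.find (P := fun m k => m ≤ k ∧ ∃ q, oldEncode q = k) h1 nextOld_ex
  have h3 := Computable.nat_rec (f := fun n : ℕ => n) (g := fun _ => Nat.find (nextOld_ex 0))
    (h := fun _ (x : ℕ × ℕ) => Nat.find (nextOld_ex (x.2 + 1))) Computable.id (Computable.const _)
    (h2.comp (c_add (Computable.snd.comp Computable.snd) (Computable.const 1)))
  refine h3.of_eq fun n => ?_
  have key : ∀ m k, m ≤ oldF k → (∀ j, m ≤ oldF j → k ≤ j) →
      Nat.find (nextOld_ex m) = oldF k := by
    intro m k h1 h2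
    apply le_antisymm
    · exact Nat.find_min' _ ⟨h1, (oldF_range _).2 ⟨k, rfl⟩⟩
    · obtain ⟨h4, h5⟩ := Nat.find_spec (nextOld_ex m)
      obtain ⟨j, hj⟩ := (oldF_range _).1 h5
      rw [← hj] at h4 ⊢
      exact oldF_mono.monotone (h2 j h4)
  induction n with
  | zero => exact key 0 0 (Nat.zero_le _) (fun _ _ => Nat.zero_le _)
  | succ n ih =>
    simp only [ih]
    exact key _ _ (oldF_mono (Nat.lt_succ_self n)) fun j hj => oldF_mono.lt_iff_lt.1 hj

theorem c_oldEncode : Computable oldEncode :=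
  (c_oldF.comp Computable.encode).of_eq fun q => by rw [oldF, Denumerable.ofNat_encode]

theorem c_rP : Computable rP := (c_cP.comp c_oldEncode).of_eq cP_old
theorem c_rN : Computable rN := (c_cN.comp c_oldEncode).of_eq cN_old
theorem c_den : Computable Rat.den := (c_cD.comp c_oldEncode).of_eq cD_old

theorem rat_eq (q : ℚ) : q = ((rP q : ℚ) - rN q) / q.den := by
  have h : ((rP q : ℤ) - rN q) = q.num := by unfold rP rN; omega
  have h' : ((rP q : ℚ) - rN q) = q.num := by exact_mod_cast h
  rw [h', Rat.num_div_den]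

theorem den_pos' (q : ℚ) : (0 : ℚ) < q.den := by exact_mod_cast q.pos

variable {α : Type*} [Primcodable α]

theorem q_le {f g : α → ℚ} (hf : Computable f) (hg : Computable g) :
    ComputablePred fun a => f a ≤ g a := by
  have h : ComputablePred fun a => rP (f a) * (g a).den + rN (g a) * (f a).den ≤
      rP (g a) * (f a).den + rN (f a) * (g a).den := by
    refine cp_le_nat (c_add (c_mul ?_ ?_) (c_mul ?_ ?_)) (c_add (c_mul ?_ ?_) (c_mul ?_ ?_))
    all_goals first
      | exact c_rP.comp hf | exact c_rP.comp hg | exact c_rN.comp hf | exact c_rN.comp hg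
      | exact c_den.comp hf | exact c_den.comp hg
  refine h.of_eq fun a => ?_
  conv_rhs => rw [rat_eq (f a), rat_eq (g a)]
  rw [div_le_div_iff₀ (den_pos' _) (den_pos' _), ← Nat.cast_le (α := ℚ)]
  push_cast
  constructor <;> intro h <;> linarith

theorem q_eq {f g : α → ℚ} (hf : Computable f) (hg : Computable g) :
    ComputablePred fun a => f a = g a :=
  (cp_and (q_le hf hg) (q_le hg hf)).of_eq fun _ => le_antisymm_iff.symm

theorem c_ratcast : Computable fun n : ℕ => (n : ℚ) := by
  apply computable_of_re_graph
  apply ComputablePred.to_re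
  have h : ComputablePred fun p : ℕ × ℚ => p.1 * p.2.den + rN p.2 = rP p.2 := by
    refine cp_eq_nat (c_add (c_mul Computable.fst ?_) ?_) ?_
    · exact c_den.comp Computable.snd
    · exact c_rN.comp Computable.snd
    · exact c_rP.comp Computable.snd
  refine h.of_eq fun p => ?_
  conv_rhs => rw [rat_eq p.2]
  rw [eq_div_iff (den_pos' _).ne', ← Nat.cast_inj (R := ℚ)]
  push_cast
  constructor <;> intro h <;> linarith

theorem rat_sub_iff (a b c : ℚ) : rP a * (b.den * c.den) + rN b * (a.den * c.den) +
          rN c * (a.den * b.den) =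
        rN a * (b.den * c.den) + rP b * (a.den * c.den) +
          rP c * (a.den * b.den) ↔ a - b = c := by
  conv_rhs => rw [rat_eq a, rat_eq b, rat_eq c]
  rw [div_sub_div _ _ (den_pos' _).ne' (den_pos' _).ne',
    div_eq_div_iff (mul_pos (den_pos' _) (den_pos' _)).ne' (den_pos' _).ne',
    ← Nat.cast_inj (R := ℚ)]
  push_cast
  constructor <;> intro h <;> linarith

theorem rat_mul_iff (a b c : ℚ) : (rP a * rP b + rN a * rN b) * c.den +
          rN c * (a.den * b.den) =
        (rP a * rN b + rN a * rP b) * c.den +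
          rP c * (a.den * b.den) ↔ a * b = c := by
  conv_rhs => rw [rat_eq a, rat_eq b, rat_eq c]
  rw [div_mul_div_comm,
    div_eq_div_iff (mul_pos (den_pos' _) (den_pos' _)).ne' (den_pos' _).ne',
    ← Nat.cast_inj (R := ℚ)]
  push_cast
  constructor <;> intro h <;> linarith

theorem q_sub_aux {a b c : α → ℚ} (ha : Computable a) (hb : Computable b) (hc : Computable c) :
  ComputablePred fun p => a p - b p = c p := by
  have d1 := c_den.comp ha
  have d2 := c_den.comp hb
  have d3 := c_den.comp hc
  have p1 := c_rP.comp ha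
  have p2 := c_rP.comp hb
  have p3 := c_rP.comp hc
  have n1 := c_rN.comp ha
  have n2 := c_rN.comp hb
  have n3 := c_rN.comp hc
  refine (cp_eq_nat (c_add (c_add (c_mul p1 (c_mul d2 d3)) (c_mul n2 (c_mul d1 d3)))
        (c_mul n3 (c_mul d1 d2))) (c_add (c_add (c_mul n1 (c_mul d2 d3)) (c_mul p2 (c_mul d1 d3)))
        (c_mul p3 (c_mul d1 d2)))).of_eq fun p => ?_
  exact rat_sub_iff (a p) (b p) (c p)
theorem q_sub1 : Computable fun p : ℚ × ℚ => p.1 - p.2 := by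
  apply computable_of_re_graph
  apply ComputablePred.to_re
  exact q_sub_aux (Computable.fst.comp Computable.fst) (Computable.snd.comp Computable.fst) Computable.snd

theorem q_sub {f g : α → ℚ} (hf : Computable f) (hg : Computable g) :
    Computable fun a => f a - g a := by
  have h := q_sub1.comp (hf.pair hg)
  exact h

theorem q_add {f g : α → ℚ} (hf : Computable f) (hg : Computable g) :
    Computable fun a => f a + g a :=
  (q_sub hf (q_sub (Computable.const 0) hg)).of_eq fun a => by ring

theorem q_mul_aux {a b c : α → ℚ} (ha : Computable a) (hb : Computable b) (hc : Computable c) :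
  ComputablePred fun p => a p * b p = c p := by
  have d1 := c_den.comp ha
  have d2 := c_den.comp hb
  have d3 := c_den.comp hc
  have p1 := c_rP.comp ha
  have p2 := c_rP.comp hb
  have p3 := c_rP.comp hc
  have n1 := c_rN.comp ha
  have n2 := c_rN.comp hb
  have n3 := c_rN.comp hc
  refine (cp_eq_nat (c_add (c_mul (c_add (c_mul p1 p2) (c_mul n1 n2)) d3)
        (c_mul n3 (c_mul d1 d2))) (c_add (c_mul (c_add (c_mul p1 n2) (c_mul n1 p2)) d3)
        (c_mul p3 (c_mul d1 d2)))).of_eq fun p => ?_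
  exact rat_mul_iff (a p) (b p) (c p)
theorem q_mul1 : Computable fun p : ℚ × ℚ => p.1 * p.2 := by
  apply computable_of_re_graph
  apply ComputablePred.to_re
  exact q_mul_aux (Computable.fst.comp Computable.fst) (Computable.snd.comp Computable.fst) Computable.snd

theorem q_mul {f g : α → ℚ} (hf : Computable f) (hg : Computable g) :
    Computable fun a => f a * g a := by
  have h := q_mul1.comp (hf.pair hg)
  exact h

theorem q_max {f g : α → ℚ} (hf : Computable f) (hg : Computable g) :
    Computable fun a => max (f a) (g a) :=
  (cp_ite (q_le hf hg) hg hf).of_eq fun a => by rw [max_def]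

theorem q_min {f g : α → ℚ} (hf : Computable f) (hg : Computable g) :
    Computable fun a => min (f a) (g a) :=
  (cp_ite (q_le hf hg) hf hg).of_eq fun a => by rw [min_def]

theorem q_lt {f g : α → ℚ} (hf : Computable f) (hg : Computable g) :
    ComputablePred fun a => f a < g a :=
  (q_le hg hf).not.of_eq fun _ => not_le

theorem q_pow (c : ℚ) {f : α → ℕ} (hf : Computable f) : Computable fun a => c ^ f a := by
  have h := Computable.nat_rec (f := f) (g := fun _ => (1 : ℚ))
    (h := fun _ (x : ℕ × ℚ) => x.2 * c) hf (Computable.const _)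
    (q_mul (Computable.snd.comp Computable.snd) (Computable.const c))
  refine h.of_eq fun a => ?_
  generalize f a = n
  induction n with
  | zero => simp
  | succ n ih => simp only [ih, pow_succ]

end RatComp

end Fan

namespace Fan

section Data

open Nat.Partrec (Code)
open Encodable Denumerable

def ev (s : ℕ) : Option ℕ := Code.evaln (s.unpair.2 + 1) (Denumerable.ofNat Code s.unpair.1) s.unpair.1
def ev' (s : ℕ) : Option ℕ := Code.evaln (s.unpair.2) (Denumerable.ofNat Code s.unpair.1) s.unpair.1

/-- the diagonal computation with code `s.unpair.1` halts exactly at step `s.unpair.2 + 1` -/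
def hlt (s : ℕ) : Bool := (ev s).isSome && !(ev' s).isSome

def eD (s : ℕ) : ℕ := bif hlt s then 2 * s.unpair.1 + 1 else 2 * s
def colD (s : ℕ) : Bool := bif hlt s then !((ev s).getD 1).bodd else false

theorem c_ev : Computable ev := by
  have h1 : Primrec fun s : ℕ => ((s.unpair.2 + 1, Denumerable.ofNat Code s.unpair.1), s.unpair.1) :=
    Primrec.pair (Primrec.pair (Primrec.succ.comp (Primrec.snd.comp Primrec.unpair))
      ((Primrec.ofNat Code).comp (Primrec.fst.comp Primrec.unpair)))
      (Primrec.fst.comp Primrec.unpair)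
  exact (Code.primrec_evaln.comp h1).to_comp

theorem c_ev' : Computable ev' := by
  have h1 : Primrec fun s : ℕ => ((s.unpair.2, Denumerable.ofNat Code s.unpair.1), s.unpair.1) :=
    Primrec.pair (Primrec.pair ((Primrec.snd.comp Primrec.unpair))
      ((Primrec.ofNat Code).comp (Primrec.fst.comp Primrec.unpair)))
      (Primrec.fst.comp Primrec.unpair)
  exact (Code.primrec_evaln.comp h1).to_comp

theorem c_hlt : Computable hlt :=
  Primrec.and.to_comp.comp (Primrec.option_isSome.to_comp.comp c_ev)
    (Primrec.not.to_comp.comp (Primrec.option_isSome.to_comp.comp c_ev'))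

theorem c_eD : Computable eD :=
  Computable.cond c_hlt (c_add (c_mul (Computable.const 2)
    (Computable.fst.comp Computable.unpair)) (Computable.const 1))
    (c_mul (Computable.const 2) Computable.id)

theorem c_colD : Computable colD :=
  Computable.cond c_hlt (Primrec.not.to_comp.comp (Computable.nat_bodd.comp
    (Computable.option_getD c_ev (Computable.const 1)))) (Computable.const false)

theorem hlt_unique {s s' : ℕ} (h : hlt s = true) (h' : hlt s' = true)
    (hn : s.unpair.1 = s'.unpair.1) : s.unpair.2 ≤ s'.unpair.2 := by
  by_contra hlt'
  push Not at hlt'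
  simp only [hlt, Bool.and_eq_true, Bool.not_eq_true', ev, ev'] at h h'
  obtain ⟨x, hx⟩ := Option.isSome_iff_exists.1 h'.1
  have := Code.evaln_mono hlt' hx
  rw [← hn] at this
  rw [Option.mem_def.1 this] at h
  simp at h

theorem eD_inj : Function.Injective eD := by
  intro s s' h
  unfold eD at h
  cases h1 : hlt s <;> cases h2 : hlt s' <;> simp only [h1, h2, cond_true, cond_false] at h
  · omega
  · omega
  · omega
  · have hn : s.unpair.1 = s'.unpair.1 := by omega
    have := le_antisymm (hlt_unique h1 h2 hn) (hlt_unique h2 h1 hn.symm)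
    rw [← Nat.pair_unpair s, ← Nat.pair_unpair s', hn, this]

theorem no_sep (X : ℕ → Bool) (hX : Computable X) : ¬ ∀ k, X (eD k) = colD k := by
  intro h
  have h1 : Computable fun m => (X (2 * m + 1)).toNat :=
    (Computable.cond (hX.comp (c_add (c_mul (Computable.const 2) Computable.id)
      (Computable.const 1))) (Computable.const 1) (Computable.const 0)).of_eq fun m => by
        rw [id]; cases X (2 * m + 1) <;> rfl
  obtain ⟨c, hc⟩ := Nat.Partrec.Code.exists_code.1 (Partrec.nat_iff.1 h1.partrec)
  set n := encode c with hn
  have hcn : Denumerable.ofNat Code n = c := by rw [hn, Denumerable.ofNat_encode]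
  have hev : (X (2 * n + 1)).toNat ∈ c.eval n := by rw [hc]; exact Part.mem_some _
  have hex : ∃ k, (Code.evaln k c n).isSome := by
    obtain ⟨k, hk⟩ := Code.evaln_complete.1 hev
    exact ⟨k, by rw [Option.mem_def.1 hk]; rfl⟩
  obtain ⟨t, ht, ht'⟩ : ∃ t, (Code.evaln (t + 1) c n).isSome = true ∧
      (Code.evaln t c n).isSome = false := by
    classical
    have hs := Nat.find_spec hex
    have hm := fun m => Nat.find_min hex (m := m)
    set k := Nat.find hex
    rcases k with _ | t
    · simp [Code.evaln] at hs
    · exact ⟨t, hs, by simpa using hm t (Nat.lt_succ_self t)⟩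
  have hh := h (Nat.pair n t)
  have hhl : hlt (Nat.pair n t) = true := by
    simp [hlt, ev, ev', Nat.unpair_pair, hcn, ht, ht']
  obtain ⟨v, hv⟩ := Option.isSome_iff_exists.1 ht
  have hv2 : v = (X (2 * n + 1)).toNat := Part.mem_unique (Code.evaln_sound hv) hev
  simp only [eD, colD, hhl, cond_true, Nat.unpair_pair, ev, hcn, hv] at hh
  rw [Option.getD_some, hv2] at hh
  cases hXX : X (2 * n + 1) <;> simp [hXX] at hh

theorem no_sep_re (X : ℕ → Bool) (hX : REPred fun p : ℕ × Bool => X p.1 = p.2) :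
    ¬ ∀ k, X (eD k) = colD k := no_sep X (computable_of_re_graph hX)

end Data
end Fan

namespace Fan

section Seqs

set_option linter.unusedSectionVars false

/-- the precision levels -/
def NN : ℕ → ℕ
  | 0 => 0
  | s + 1 => NN s + eD s + 4

def Valid (s : ℕ) (X : ℕ → Bool) : Prop := ∀ k < s, X (eD k) = colD k

/-- pointwise minimal valid sequence -/
def lam (s : ℕ) (n : ℕ) : Bool := decide (∃ k < s, eD k = n ∧ colD k = true)

variable (𝕜 : Type*) [Field 𝕜] [LinearOrder 𝕜] [IsStrictOrderedRing 𝕜]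

def yN (X : ℕ → Bool) : ℕ → 𝕜
  | 0 => 0
  | n + 1 => yN X n + (bif X n then 3 else 1) * (1 / 4) ^ (n + 1)

def MM (s : ℕ) : 𝕜 := yN 𝕜 (lam s) (NN s)

theorem NN_succ (s : ℕ) : NN (s + 1) = NN s + eD s + 4 := rfl

theorem NN_mono : StrictMono NN := strictMono_nat_of_lt_succ fun s => by rw [NN_succ]; omega

theorem le_NN (s : ℕ) : s ≤ NN s := NN_mono.le_apply

theorem eD_lt_NN {k s : ℕ} (h : k < s) : eD k < NN s := by
  have h1 := NN_mono.monotone (Nat.succ_le_of_lt h)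
  have h2 := NN_succ k
  simp only [Nat.succ_eq_add_one] at h1
  omega

theorem Valid.mono {s s' : ℕ} {X : ℕ → Bool} (h : Valid s' X) (hs : s ≤ s') : Valid s X :=
  fun k hk => h k (hk.trans_le hs)

theorem Valid.congr {s : ℕ} {X Y : ℕ → Bool} (h : Valid s X) (hXY : ∀ n < NN s, X n = Y n) :
    Valid s Y := fun k hk => by rw [← hXY _ (eD_lt_NN hk)]; exact h k hk

theorem lam_valid (s : ℕ) : Valid s (lam s) := by
  intro k hk
  rw [lam]
  cases hc : colD k with
  | true => simpa using ⟨k, hk, rfl, hc⟩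
  | false =>
    simp only [decide_eq_false_iff_not]
    rintro ⟨j, _, h1, h2⟩
    rw [eD_inj h1, hc] at h2
    cases h2

theorem lam_le {s : ℕ} {X : ℕ → Bool} (h : Valid s X) (n : ℕ) (hn : lam s n = true) :
    X n = true := by
  simp only [lam, decide_eq_true_eq] at hn
  obtain ⟨k, hk, rfl, hc⟩ := hn
  rw [h k hk, hc]

theorem lam_mono {s s' : ℕ} (hs : s ≤ s') (n : ℕ) (hn : lam s n = true) : lam s' n = true :=
  lam_le ((lam_valid s').mono hs) n hn

variable {𝕜}

theorem digit_pos (b : Bool) : (1 : 𝕜) ≤ (bif b then 3 else 1) := by cases b <;> norm_num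
theorem digit_le (b : Bool) : ((bif b then 3 else 1) : 𝕜) ≤ 3 := by cases b <;> norm_num

theorem quarter_pos (n : ℕ) : (0 : 𝕜) < (1 / 4) ^ n := by positivity

theorem yN_succ (X : ℕ → Bool) (n : ℕ) :
  yN 𝕜 X (n + 1) = yN 𝕜 X n + (bif X n then 3 else 1) * (1 / 4) ^ (n + 1) := rfl

theorem yN_step_lo (X : ℕ → Bool) (n : ℕ) : yN 𝕜 X n + (1 / 4) ^ (n + 1) ≤ yN 𝕜 X (n + 1) := by
  rw [yN_succ]
  have := mul_le_mul_of_nonneg_right (digit_pos (𝕜 := 𝕜) (X n)) (quarter_pos (𝕜 := 𝕜) (n + 1)).le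
  linarith

theorem yN_step_hi (X : ℕ → Bool) (n : ℕ) :
    yN 𝕜 X (n + 1) + (1 / 4) ^ (n + 1) ≤ yN 𝕜 X n + (1 / 4) ^ n := by
  rw [yN_succ]
  have := mul_le_mul_of_nonneg_right (digit_le (𝕜 := 𝕜) (X n)) (quarter_pos (𝕜 := 𝕜) (n + 1)).le
  have h4 : (1 / 4 : 𝕜) ^ n = 4 * (1 / 4) ^ (n + 1) := by rw [pow_succ]; ring
  rw [h4]; linarith

theorem yN_lo (X : ℕ → Bool) {n m : ℕ} (h : n ≤ m) : yN 𝕜 X n ≤ yN 𝕜 X m := by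
  refine monotone_nat_of_le_succ (f := yN 𝕜 X) (fun k => ?_) h
  have := yN_step_lo (𝕜 := 𝕜) X k
  have := quarter_pos (𝕜 := 𝕜) (k + 1)
  linarith

theorem yN_hi (X : ℕ → Bool) {n m : ℕ} (h : n ≤ m) :
    yN 𝕜 X m + (1 / 4) ^ m ≤ yN 𝕜 X n + (1 / 4) ^ n :=
  antitone_nat_of_succ_le (f := fun k => yN 𝕜 X k + (1 / 4) ^ k) (fun k => yN_step_hi X k) h

theorem yN_nonneg (X : ℕ → Bool) (n : ℕ) : 0 ≤ yN 𝕜 X n := yN_lo X (Nat.zero_le n)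

theorem yN_le_one (X : ℕ → Bool) (n : ℕ) : yN 𝕜 X n + (1 / 4) ^ n ≤ 1 := by
  have := yN_hi (𝕜 := 𝕜) X (Nat.zero_le n)
  simpa [yN] using this

theorem yN_congr {X Y : ℕ → Bool} (n : ℕ) (h : ∀ i < n, X i = Y i) : yN 𝕜 X n = yN 𝕜 Y n := by
  induction n with
  | zero => rfl
  | succ n ih =>
    rw [yN_succ, yN_succ, ih fun i hi => h i (hi.trans n.lt_succ_self), h n n.lt_succ_self]

theorem yN_mono {X Y : ℕ → Bool} (h : ∀ i, X i = true → Y i = true) (n : ℕ) :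
    yN 𝕜 X n ≤ yN 𝕜 Y n := by
  induction n with
  | zero => exact le_rfl
  | succ n ih =>
    rw [yN_succ, yN_succ]
    refine add_le_add ih (mul_le_mul_of_nonneg_right ?_ (quarter_pos _).le)
    cases hx : X n with
    | false => exact digit_pos _
    | true => rw [h n hx]

theorem MM_nonneg (s : ℕ) : 0 ≤ MM 𝕜 s := yN_nonneg _ _

theorem MM_leg_le (s : ℕ) : MM 𝕜 s + (1 / 4) ^ NN s ≤ 1 := yN_le_one _ _

theorem MM_step (s : ℕ) : MM 𝕜 s + (1 / 4) ^ (NN s + 1) ≤ MM 𝕜 (s + 1) := by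
  have h1 : yN 𝕜 (lam s) (NN s) ≤ yN 𝕜 (lam (s + 1)) (NN s) :=
    yN_mono (lam_mono s.le_succ) _
  have h2 := yN_step_lo (𝕜 := 𝕜) (lam (s + 1)) (NN s)
  have h3 : yN 𝕜 (lam (s + 1)) (NN s + 1) ≤ yN 𝕜 (lam (s + 1)) (NN (s + 1)) :=
    yN_lo _ (by rw [NN_succ]; omega)
  unfold MM
  linarith

theorem MM_mono : Monotone (MM 𝕜) := monotone_nat_of_le_succ fun s => by
  have := MM_step (𝕜 := 𝕜) s
  have := quarter_pos (𝕜 := 𝕜) (NN s + 1)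
  linarith

theorem bits_exist (X : ℕ → Bool) (N : ℕ) : ∃ k < 2 ^ N, ∀ i < N, Nat.testBit k i = X i := by
  induction N with
  | zero => exact ⟨0, by norm_num, by simp⟩
  | succ N ih =>
    obtain ⟨k, hk, h⟩ := ih
    cases hX : X N with
    | false =>
      refine ⟨k, by rw [pow_succ]; omega, fun i hi => ?_⟩
      rcases Nat.lt_succ_iff_lt_or_eq.1 hi with h1 | rfl
      · exact h i h1
      · rw [hX]; exact Nat.testBit_lt_two_pow hk
    | true =>
      refine ⟨2 ^ N + k, by rw [pow_succ]; omega, fun i hi => ?_⟩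
      rcases Nat.lt_succ_iff_lt_or_eq.1 hi with h1 | rfl
      · rw [Nat.testBit_two_pow_add_gt h1, h i h1]
      · rw [hX, Nat.testBit_two_pow_add_eq, Nat.testBit_lt_two_pow hk]; rfl

/-- cylinder interval -/
def cyl (X : ℕ → Bool) (N : ℕ) : Set ℝ := Icc (yN ℝ X N) (yN ℝ X N + (1 / 4) ^ N)

theorem cyl_anti (X : ℕ → Bool) {n m : ℕ} (h : n ≤ m) : cyl X m ⊆ cyl X n :=
  Icc_subset_Icc (yN_lo X h) (yN_hi X h)

theorem cyl_congr {X Y : ℕ → Bool} {n : ℕ} (h : ∀ i < n, X i = Y i) : cyl X n = cyl Y n := by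
  rw [cyl, cyl, yN_congr n h]

theorem cyl_disj {X Y : ℕ → Bool} {y : ℝ} {N n : ℕ} (hX : y ∈ cyl X N) (hY : y ∈ cyl Y N)
    (hn : n < N) : X n = Y n := by
  induction n using Nat.strong_induction_on with
  | _ n ih =>
    have h1 := cyl_anti X (Nat.succ_le_of_lt hn) hX
    have h2 := cyl_anti Y (Nat.succ_le_of_lt hn) hY
    have h3 : yN ℝ X n = yN ℝ Y n := yN_congr n fun i hi => ih i hi (hi.trans hn)
    simp only [cyl, mem_Icc, Nat.succ_eq_add_one, yN_succ, h3] at h1 h2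
    have := quarter_pos (𝕜 := ℝ) (n + 1)
    cases hx : X n <;> cases hy : Y n <;> simp only [hx, hy, cond_true, cond_false] at h1 h2
    · rfl
    · exfalso; linarith [h1.2, h2.1]
    · exfalso; linarith [h1.1, h2.2]
    · rfl

theorem closed_cyl (Φ : (ℕ → Bool) → Prop) (N : ℕ) : IsClosed {y | ∃ X, Φ X ∧ y ∈ cyl X N} := by
  have hfin : (range fun X => cyl X N).Finite := by
    refine ((Set.finite_lt_nat (2 ^ N)).image fun k => cyl (Nat.testBit k) N).subset ?_
    rintro _ ⟨X, rfl⟩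
    obtain ⟨k, hk, h⟩ := bits_exist X N
    exact ⟨k, hk, cyl_congr h⟩
  have : {y | ∃ X, Φ X ∧ y ∈ cyl X N} = ⋃₀ ((fun X => cyl X N) '' {X | Φ X}) := by
    ext y
    simp
  rw [this]
  rw [sUnion_eq_biUnion]
  refine Set.Finite.isClosed_biUnion (hfin.subset (image_subset_range _ _)) ?_
  rintro _ ⟨X, _, rfl⟩
  exact isClosed_Icc

def PP (s : ℕ) : Set ℝ := {y | ∃ X, Valid s X ∧ y ∈ cyl X (NN s)}

def PI : Set ℝ := ⋂ s, PP s

theorem PP_closed (s : ℕ) : IsClosed (PP s) := closed_cyl _ _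

theorem PP_anti {s s' : ℕ} (h : s ≤ s') : PP s' ⊆ PP s := by
  rintro y ⟨X, hX, hy⟩
  exact ⟨X, hX.mono h, cyl_anti X (NN_mono.monotone h) hy⟩

theorem PP_sub (s : ℕ) : PP s ⊆ Icc (MM ℝ s) 1 := by
  rintro y ⟨X, hX, hy⟩
  exact ⟨(yN_mono (lam_le hX) _).trans hy.1, hy.2.trans (yN_le_one _ _)⟩

theorem leg_sub (s : ℕ) : Icc (MM ℝ s) (MM ℝ s + (1 / 4) ^ NN s) ⊆ PP s :=
  fun _ hy => ⟨lam s, lam_valid s, hy⟩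

theorem PI_closed : IsClosed PI := isClosed_iInter PP_closed

theorem PI_sub : PI ⊆ Icc 0 1 := fun y hy => by
  have := PP_sub 0 (mem_iInter.1 hy 0)
  exact ⟨(MM_nonneg 0).trans this.1, this.2⟩

theorem PI_compact : IsCompact PI := isCompact_Icc.of_isClosed_subset PI_closed PI_sub

theorem PI_mem {y : ℝ} (hy : y ∈ PI) :
    ∃ X : ℕ → Bool, (∀ k, X (eD k) = colD k) ∧ ∀ s, y ∈ cyl X (NN s) := by
  have h := fun s => mem_iInter.1 hy s
  choose Xs hv hc using h
  have key : ∀ s s' n, n < NN s → n < NN s' → Xs s n = Xs s' n := by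
    intro s s' n h1 h2
    rcases le_total s s' with h | h
    · exact cyl_disj (hc s) (cyl_anti _ (NN_mono.monotone h) (hc s')) h1
    · exact cyl_disj (cyl_anti _ (NN_mono.monotone h) (hc s)) (hc s') h2
  have hN : ∀ n, n < NN (n + 1) := fun n => le_NN (n + 1)
  refine ⟨fun n => Xs (n + 1) n, fun k => ?_, fun s => ?_⟩
  · have h1 := hv (k + 1) k k.lt_succ_self
    rw [← h1]
    exact key _ _ _ (hN _) (eD_lt_NN k.lt_succ_self)
  · rw [cyl_congr (Y := Xs s) fun i hi => key _ _ _ (hN i) hi]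
    exact hc s

theorem PI_nonempty : PI.Nonempty := by
  classical
  let X : ℕ → Bool := fun n => decide (∃ k, eD k = n ∧ colD k = true)
  have hX : ∀ s, Valid s X := by
    intro s k _
    cases hc : colD k with
    | true => exact decide_eq_true ⟨k, rfl, hc⟩
    | false =>
      refine decide_eq_false ?_
      rintro ⟨j, h1, h2⟩
      rw [eD_inj h1, hc] at h2
      cases h2
  have hb : ∀ n m, yN ℝ X n ≤ yN ℝ X m + (1 / 4) ^ m := by
    intro n m
    have q1 := quarter_pos (𝕜 := ℝ) n
    have q2 := quarter_pos (𝕜 := ℝ) m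
    rcases le_total n m with h | h
    · have := yN_lo (𝕜 := ℝ) X h; linarith
    · have := yN_hi (𝕜 := ℝ) X h; linarith
  refine ⟨⨆ n, yN ℝ X n, mem_iInter.2 fun s => ⟨X, hX s, ?_, ?_⟩⟩
  · exact le_ciSup (f := fun n => yN ℝ X n) ⟨1, by rintro _ ⟨n, rfl⟩; simpa [yN] using hb n 0⟩ _
  · exact ciSup_le fun n => hb n _

end Seqs
end Fan

namespace Fan

section Hook

set_option linter.unusedSectionVars false

variable {𝕜 : Type*} [Field 𝕜] [LinearOrder 𝕜] [IsStrictOrderedRing 𝕜]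

/-- clamp to `[0,1]` -/
def cl (u : 𝕜) : 𝕜 := max 0 (min u 1)

/-- the hook map; `κ = 2⁻ⁿ`, `K = 2ⁿ` -/
def hk (κ K M δ ε : 𝕜) (p : 𝕜 × 𝕜) : 𝕜 × 𝕜 :=
  (min p.1 (1 - κ) + cl (6 * K * (p.1 - (1 - κ))) * (1 - ε * (1 - p.2) - (1 - κ))
      - cl (6 * K * (p.1 - (1 - κ)) - 2) * (1 - ε * (1 - p.2) - (1 - 3 / 4 * κ))
      - δ * max (p.1 - (1 - κ / 2)) 0,
    p.2 + cl (6 * K * (p.1 - (1 - κ)) - 1) * (M + δ * (1 - p.2) - p.2))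

theorem cl_zero {u : 𝕜} (h : u ≤ 0) : cl u = 0 := max_eq_left ((min_le_left _ _).trans h)
theorem cl_one {u : 𝕜} (h : 1 ≤ u) : cl u = 1 := by
  rw [cl, min_eq_right h]; exact max_eq_right zero_le_one
theorem cl_mid {u : 𝕜} (h : 0 ≤ u) (h' : u ≤ 1) : cl u = u := by
  rw [cl, min_eq_left h', max_eq_right h]
theorem cl_nonneg (u : 𝕜) : 0 ≤ cl u := le_max_left _ _
theorem cl_le_one (u : 𝕜) : cl u ≤ 1 := max_le zero_le_one (min_le_right _ _)

/-- the standing assumptions -/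
structure HA (κ K M δ ε M' : ℝ) : Prop where
  κ0 : 0 < κ
  κ1 : κ ≤ 1
  Kκ : K * κ = 1
  δ0 : 0 < δ
  δ1 : δ ≤ 1 / 16
  ε0 : 0 < ε
  ε1 : ε ≤ κ / 16
  M0 : 0 ≤ M
  MM' : M + 4 * δ ≤ M'

variable {κ K M δ ε M' : ℝ}

theorem HA.K0 (h : HA κ K M δ ε M') : 0 < K := by
  have := h.Kκ
  have := h.κ0
  by_contra hk
  nlinarith

theorem HA.K1 (h : HA κ K M δ ε M') : 1 ≤ K := by
  have h1 := h.Kκ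
  have h2 := h.κ0
  have h3 := h.κ1
  have h4 := h.K0
  nlinarith

theorem HA.u_eq (h : HA κ K M δ ε M') (t : ℝ) : κ * (6 * K * (t - (1 - κ))) = 6 * (t - (1 - κ)) := by
  linear_combination (6 * (t - (1 - κ))) * h.Kκ

theorem HA.t_eq (h : HA κ K M δ ε M') (t : ℝ) :
    t = 1 - κ + κ * (6 * K * (t - (1 - κ))) / 6 := by rw [h.u_eq]; ring

theorem hk_ph0 (h : HA κ K M δ ε M') {p : ℝ × ℝ} (hp : p.1 ≤ 1 - κ) : hk κ K M δ ε p = p := by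
  have hu : 6 * K * (p.1 - (1 - κ)) ≤ 0 :=
    mul_nonpos_of_nonneg_of_nonpos (by linarith [h.K0]) (by linarith)
  have := h.κ0
  unfold hk
  rw [cl_zero hu, cl_zero (by linarith), cl_zero (by linarith), min_eq_left hp,
    max_eq_right (by linarith)]
  ext <;> simp

theorem hk_ph1 (h : HA κ K M δ ε M') {p : ℝ × ℝ} (h0 : 0 ≤ 6 * K * (p.1 - (1 - κ)))
    (h1 : 6 * K * (p.1 - (1 - κ)) ≤ 1) : hk κ K M δ ε p =
    (1 - κ + 6 * K * (p.1 - (1 - κ)) * (1 - ε * (1 - p.2) - (1 - κ)), p.2) := by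
  have ht := h.t_eq p.1
  have := h.κ0
  unfold hk
  rw [cl_mid h0 h1, cl_zero (by linarith), cl_zero (by linarith),
    min_eq_right (by rw [ht]; nlinarith), max_eq_right (by nlinarith)]
  ext <;> simp

theorem hk_ph2 (h : HA κ K M δ ε M') {p : ℝ × ℝ} (h0 : 1 ≤ 6 * K * (p.1 - (1 - κ)))
    (h1 : 6 * K * (p.1 - (1 - κ)) ≤ 2) : hk κ K M δ ε p =
    (1 - ε * (1 - p.2), p.2 + (6 * K * (p.1 - (1 - κ)) - 1) * (M + δ * (1 - p.2) - p.2)) := by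
  have ht := h.t_eq p.1
  have := h.κ0
  unfold hk
  rw [cl_one h0, cl_mid (u := 6 * K * (p.1 - (1 - κ)) - 1) (by linarith) (by linarith),
    cl_zero (by linarith),
    min_eq_right (by rw [ht]; nlinarith), max_eq_right (by nlinarith)]
  ext <;> simp

theorem hk_ph3 (h : HA κ K M δ ε M') {p : ℝ × ℝ} (h0 : 2 ≤ 6 * K * (p.1 - (1 - κ)))
    (h1 : 6 * K * (p.1 - (1 - κ)) ≤ 3) : hk κ K M δ ε p =
    (1 - ε * (1 - p.2) - (6 * K * (p.1 - (1 - κ)) - 2) * (1 - ε * (1 - p.2) - (1 - 3 / 4 * κ)),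
      M + δ * (1 - p.2)) := by
  have ht := h.t_eq p.1
  have := h.κ0
  unfold hk
  rw [cl_one (by linarith), cl_mid (u := 6 * K * (p.1 - (1 - κ)) - 2) (by linarith) (by linarith),
    cl_one (by linarith),
    min_eq_right (by rw [ht]; nlinarith), max_eq_right (by nlinarith)]
  ext <;> simp

theorem hk_ph4 (h : HA κ K M δ ε M') {p : ℝ × ℝ} (h0 : 1 - κ / 2 ≤ p.1) : hk κ K M δ ε p =
    (1 - 3 / 4 * κ - δ * (p.1 - (1 - κ / 2)), M + δ * (1 - p.2)) := by
  have hu : 3 ≤ 6 * K * (p.1 - (1 - κ)) := by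
    have := h.K0
    have := h.Kκ
    nlinarith
  have := h.κ0
  unfold hk
  rw [cl_one (by linarith), cl_one (by linarith), cl_one (by linarith),
    min_eq_right (by linarith), max_eq_left (by linarith)]
  ext <;> simp

theorem HA.cases (h : HA κ K M δ ε M') (t : ℝ) : t ≤ 1 - κ ∨
    (0 ≤ 6 * K * (t - (1 - κ)) ∧ 6 * K * (t - (1 - κ)) ≤ 1) ∨
    (1 ≤ 6 * K * (t - (1 - κ)) ∧ 6 * K * (t - (1 - κ)) ≤ 2) ∨
    (2 ≤ 6 * K * (t - (1 - κ)) ∧ 6 * K * (t - (1 - κ)) ≤ 3) ∨ 1 - κ / 2 ≤ t := by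
  have ht := h.t_eq t
  have := h.κ0
  by_cases h0 : 6 * K * (t - (1 - κ)) ≤ 0
  · left; nlinarith
  by_cases h1 : 6 * K * (t - (1 - κ)) ≤ 1
  · right; left; exact ⟨by linarith, h1⟩
  by_cases h2 : 6 * K * (t - (1 - κ)) ≤ 2
  · right; right; left; exact ⟨by linarith, h2⟩
  by_cases h3 : 6 * K * (t - (1 - κ)) ≤ 3
  · right; right; right; left; exact ⟨by linarith, h3⟩
  · right; right; right; right; nlinarith

/-- where the points of a strand go -/
theorem hk_path (h : HA κ K M δ ε M') {p : ℝ × ℝ} (ht : p.1 ∈ Icc (0:ℝ) 1) (hy : p.2 ∈ Icc M' 1) :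
    ((hk κ K M δ ε p).2 = p.2 ∧ 0 ≤ (hk κ K M δ ε p).1 ∧ (hk κ K M δ ε p).1 ≤ 1 - ε * (1 - p.2)) ∨
    ((hk κ K M δ ε p).1 = 1 - ε * (1 - p.2) ∧ M + δ * (1 - p.2) ≤ (hk κ K M δ ε p).2 ∧
      (hk κ K M δ ε p).2 ≤ p.2) ∨
    ((hk κ K M δ ε p).2 = M + δ * (1 - p.2) ∧ 1 - κ < (hk κ K M δ ε p).1 ∧
      (hk κ K M δ ε p).1 ≤ 1 - ε * (1 - p.2)) := by
  obtain ⟨ht0, ht1⟩ := ht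
  obtain ⟨hy0, hy1⟩ := hy
  have a1 := h.κ0
  have a2 := h.κ1
  have a3 := h.δ0
  have a4 := h.δ1
  have a5 := h.ε0
  have a6 := h.ε1
  have a7 := h.M0
  have a8 := h.MM'
  have hy2 : 0 ≤ p.2 := by linarith
  have hr0 : 0 ≤ ε * (1 - p.2) := mul_nonneg a5.le (by linarith)
  have hr1 : ε * (1 - p.2) ≤ κ / 16 := by nlinarith
  have hw0 : 0 ≤ δ * (1 - p.2) := mul_nonneg a3.le (by linarith)
  have hw1 : δ * (1 - p.2) ≤ δ := by nlinarith
  rcases h.cases p.1 with c | ⟨c, c'⟩ | ⟨c, c'⟩ | ⟨c, c'⟩ | c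
  · rw [hk_ph0 h c]; left; exact ⟨rfl, ht0, by linarith⟩
  · rw [hk_ph1 h c c']; left; refine ⟨rfl, ?_, ?_⟩ <;> dsimp only
    · have : 0 ≤ 6 * K * (p.1 - (1 - κ)) * (1 - ε * (1 - p.2) - (1 - κ)) :=
        mul_nonneg c (by linarith)
      linarith
    · have : 6 * K * (p.1 - (1 - κ)) * (1 - ε * (1 - p.2) - (1 - κ)) ≤
        1 * (1 - ε * (1 - p.2) - (1 - κ)) := mul_le_mul_of_nonneg_right c' (by linarith)
      linarith
  · rw [hk_ph2 h c c']; right; left; refine ⟨rfl, ?_, ?_⟩ <;> dsimp only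
    · have : 0 ≤ (2 - 6 * K * (p.1 - (1 - κ))) * (p.2 - (M + δ * (1 - p.2))) :=
        mul_nonneg (by linarith) (by linarith)
      linarith
    · have : 0 ≤ (6 * K * (p.1 - (1 - κ)) - 1) * (p.2 - (M + δ * (1 - p.2))) :=
        mul_nonneg (by linarith) (by linarith)
      linarith
  · rw [hk_ph3 h c c']; right; right; refine ⟨rfl, ?_, ?_⟩ <;> dsimp only
    · have : 0 ≤ (3 - 6 * K * (p.1 - (1 - κ))) * (1 - ε * (1 - p.2) - (1 - 3 / 4 * κ)) :=
        mul_nonneg (by linarith) (by linarith)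
      linarith
    · have : 0 ≤ (6 * K * (p.1 - (1 - κ)) - 2) * (1 - ε * (1 - p.2) - (1 - 3 / 4 * κ)) :=
        mul_nonneg (by linarith) (by linarith)
      linarith
  · rw [hk_ph4 h c]; right; right; refine ⟨rfl, ?_, ?_⟩ <;> dsimp only
    · have : δ * (p.1 - (1 - κ / 2)) ≤ 1 / 16 * (κ / 2) :=
        mul_le_mul a4 (by linarith) (by linarith) (by norm_num)
      linarith
    · have : 0 ≤ δ * (p.1 - (1 - κ / 2)) := mul_nonneg a3.le (by linarith)
      linarith

theorem hk_min (h : HA κ K M δ ε M') {p : ℝ × ℝ} (ht : p.1 ∈ Icc (0:ℝ) 1) (hy : p.2 ∈ Icc M' 1) :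
    min p.1 (1 - κ) ≤ (hk κ K M δ ε p).1 := by
  obtain ⟨ht0, ht1⟩ := ht
  obtain ⟨hy0, hy1⟩ := hy
  have a1 := h.κ0
  have a5 := h.ε0
  have a6 := h.ε1
  have a7 := h.M0
  have a8 := h.MM'
  have a3 := h.δ0
  have hy2 : 0 ≤ p.2 := by linarith
  have hr1 : ε * (1 - p.2) ≤ κ / 16 := by nlinarith
  by_cases c : p.1 ≤ 1 - κ
  · rw [hk_ph0 h c]; exact min_le_left _ _
  push Not at c
  refine (min_le_right _ _).trans ?_
  rcases hk_path h ⟨ht0, ht1⟩ ⟨hy0, hy1⟩ with h1 | h1 | h1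
  · rcases h.cases p.1 with c | ⟨c, c'⟩ | ⟨c, c'⟩ | ⟨c, c'⟩ | c
    · rw [hk_ph0 h c]; linarith
    · rw [hk_ph1 h c c']; dsimp only
      have : 0 ≤ 6 * K * (p.1 - (1 - κ)) * (1 - ε * (1 - p.2) - (1 - κ)) :=
        mul_nonneg c (by linarith)
      linarith
    · rw [hk_ph2 h c c']; dsimp only; linarith
    · rw [hk_ph3 h c c'] at h1
      have := h1.1
      have h3 : δ * (1 - p.2) ≤ δ := by nlinarith
      dsimp only at this
      linarith
    · rw [hk_ph4 h c] at h1
      have := h1.1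
      have h3 : δ * (1 - p.2) ≤ δ := by nlinarith
      dsimp only at this
      linarith
  · rw [h1.1]; linarith
  · exact h1.2.1.le

theorem hk_inj_lt (h : HA κ K M δ ε M') {p q : ℝ × ℝ} (hpt : p.1 ∈ Icc (0:ℝ) 1)
    (hpy : p.2 ∈ Icc M' 1) (hqt : q.1 ∈ Icc (0:ℝ) 1) (hqy : q.2 ∈ Icc M' 1) (hlt : p.2 < q.2) :
    hk κ K M δ ε p ≠ hk κ K M δ ε q := by
  intro heq
  have a3 := h.δ0
  have a5 := h.ε0
  have a7 := h.M0
  have a8 := h.MM'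
  have hr : ε * (1 - q.2) < ε * (1 - p.2) := mul_lt_mul_of_pos_left (by linarith) a5
  have hw : δ * (1 - q.2) < δ * (1 - p.2) := mul_lt_mul_of_pos_left (by linarith) a3
  have hw1 : δ * (1 - p.2) ≤ δ := by nlinarith [hpy.1]
  have b1 := hpy.1
  have h1 := hk_path h hpt hpy
  have h2 := hk_path h hqt hqy
  rw [heq] at h1
  rcases h1 with ⟨x1, x2, x3⟩ | ⟨x1, x2, x3⟩ | ⟨x1, x2, x3⟩ <;>
  rcases h2 with ⟨y1, y2, y3⟩ | ⟨y1, y2, y3⟩ | ⟨y1, y2, y3⟩ <;> linarith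

set_option maxHeartbeats 1000000 in
theorem hk_inj_t (h : HA κ K M δ ε M') {t t' y : ℝ} (ht : t ∈ Icc (0:ℝ) 1)
    (ht' : t' ∈ Icc (0:ℝ) 1) (hy : y ∈ Icc M' 1) (hlt : t < t') :
    hk κ K M δ ε (t, y) ≠ hk κ K M δ ε (t', y) := by
  intro heq
  obtain ⟨hy0, hy1⟩ := hy
  have a1 := h.κ0
  have a3 := h.δ0
  have a5 := h.ε0
  have a6 := h.ε1
  have a7 := h.M0
  have a8 := h.MM'
  have hK := h.K0
  have hu : 6 * K * (t - (1 - κ)) < 6 * K * (t' - (1 - κ)) :=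
    mul_lt_mul_of_pos_left (by linarith) (by linarith)
  have et := h.u_eq t
  have et' := h.u_eq t'
  have hr1 : ε * (1 - y) ≤ κ / 16 := by nlinarith
  have hw1 : δ * (1 - y) ≤ δ := by nlinarith
  have hd : (M + δ * (1 - y) - y) < 0 := by linarith
  have hr : 0 < 1 - ε * (1 - y) - (1 - 3 / 4 * κ) := by linarith
  have hr' : 0 < 1 - ε * (1 - y) - (1 - κ) := by linarith
  have hdt := mul_lt_mul_of_pos_left hlt a3
  have h0 := @hk_ph0 _ _ _ _ _ _ h (t, y)
  have h1 := @hk_ph1 _ _ _ _ _ _ h (t, y)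
  have h2 := @hk_ph2 _ _ _ _ _ _ h (t, y)
  have h3 := @hk_ph3 _ _ _ _ _ _ h (t, y)
  have h4 := @hk_ph4 _ _ _ _ _ _ h (t, y)
  have h0' := @hk_ph0 _ _ _ _ _ _ h (t', y)
  have h1' := @hk_ph1 _ _ _ _ _ _ h (t', y)
  have h2' := @hk_ph2 _ _ _ _ _ _ h (t', y)
  have h3' := @hk_ph3 _ _ _ _ _ _ h (t', y)
  have h4' := @hk_ph4 _ _ _ _ _ _ h (t', y)
  have hc := h.cases t
  have hc' := h.cases t'
  rw [heq] at h0 h1 h2 h3 h4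
  dsimp only at *
  generalize hk κ K M δ ε (t', y) = P at *
  obtain ⟨P1, P2⟩ := P
  simp only [Prod.mk.injEq] at *
  generalize 6 * K * (t - (1 - κ)) = u at *
  generalize 6 * K * (t' - (1 - κ)) = v at *
  have m1 := mul_lt_mul_of_pos_right hu hr'
  have m2 := mul_lt_mul_of_neg_right hu hd
  have m3 := mul_lt_mul_of_pos_right hu hr
  have m4 := mul_lt_mul_of_pos_left hu a1
  have k1 : ∀ {w : ℝ}, w < 1 → w * (1 - ε * (1 - y) - (1 - κ)) < 1 - ε * (1 - y) - (1 - κ) :=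
    fun hw => by nlinarith
  have k1' : ∀ {w : ℝ}, 0 < w → 0 < w * (1 - ε * (1 - y) - (1 - κ)) :=
    fun hw => by positivity
  have k2 : ∀ {w : ℝ}, 1 < w → (w - 1) * (M + δ * (1 - y) - y) < 0 := fun hw => by nlinarith
  have k2' : ∀ {w : ℝ}, w < 2 → M + δ * (1 - y) - y < (w - 1) * (M + δ * (1 - y) - y) :=
    fun hw => by nlinarith
  have k3 : ∀ {w : ℝ}, 2 < w → 0 < (w - 2) * (1 - ε * (1 - y) - (1 - 3 / 4 * κ)) :=
    fun hw => by nlinarith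
  have k3' : ∀ {w : ℝ}, w < 3 →
    (w - 2) * (1 - ε * (1 - y) - (1 - 3 / 4 * κ)) < 1 - ε * (1 - y) - (1 - 3 / 4 * κ) :=
    fun hw => by nlinarith
  have k4 : ∀ {w : ℝ}, 1 - κ / 2 < w → 0 < δ * (w - (1 - κ / 2)) :=
    fun hw => by nlinarith
  have k5 : 3 < v → 1 - κ / 2 < t' := fun hw => by nlinarith
  have k6 : 1 - κ / 2 ≤ t' → 3 ≤ v := fun hw => by nlinarith
  have k7 : t ≤ 1 - κ → u ≤ 0 := fun hw => by nlinarith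
  have k8 : u < 0 → t < 1 - κ := fun hw => by nlinarith
  have k10 : t' ≤ 1 - κ → v ≤ 0 := fun hw => by nlinarith
  have k9 : 1 - κ / 2 ≤ t' → 0 ≤ δ * (t' - (1 - κ / 2)) :=
    fun hw => mul_nonneg a3.le (by linarith)
  clear m4 et et' heq
  rcases hc with c | ⟨c, c'⟩ | ⟨c, c'⟩ | ⟨c, c'⟩ | c
  · obtain ⟨x1, x2⟩ := h0 c
    rcases hc' with d | ⟨d, d'⟩ | ⟨d, d'⟩ | ⟨d, d'⟩ | d
    · obtain ⟨y1, y2⟩ := h0' d; linarith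
    · obtain ⟨y1, y2⟩ := h1' d d'
      rcases d.lt_or_eq with e | e
      · have := k1' e; linarith
      · have := k8 (by linarith); rw [← e] at y1; linarith
    · obtain ⟨y1, y2⟩ := h2' d d'; linarith
    · obtain ⟨y1, y2⟩ := h3' d d'; linarith
    · obtain ⟨y1, y2⟩ := h4' d; linarith
  · obtain ⟨x1, x2⟩ := h1 c c'
    rcases hc' with d | ⟨d, d'⟩ | ⟨d, d'⟩ | ⟨d, d'⟩ | d
    · linarith [k10 d]
    · obtain ⟨y1, y2⟩ := h1' d d'; linarith
    · obtain ⟨y1, y2⟩ := h2' d d'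
      rcases d.lt_or_eq with e | e
      · have := k2 e; linarith
      · have := k1 (w := u) (by linarith); linarith
    · obtain ⟨y1, y2⟩ := h3' d d'; linarith
    · obtain ⟨y1, y2⟩ := h4' d; linarith
  · obtain ⟨x1, x2⟩ := h2 c c'
    rcases hc' with d | ⟨d, d'⟩ | ⟨d, d'⟩ | ⟨d, d'⟩ | d
    · linarith [k10 d]
    · linarith
    · obtain ⟨y1, y2⟩ := h2' d d'; linarith
    · obtain ⟨y1, y2⟩ := h3' d d'
      rcases d.lt_or_eq with e | e
      · have := k3 e; linarith
      · have := k2' (w := u) (by linarith); linarith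
    · obtain ⟨y1, y2⟩ := h4' d
      have := k9 d; linarith
  · obtain ⟨x1, x2⟩ := h3 c c'
    rcases hc' with d | ⟨d, d'⟩ | ⟨d, d'⟩ | ⟨d, d'⟩ | d
    · linarith [k10 d]
    · linarith
    · linarith
    · obtain ⟨y1, y2⟩ := h3' d d'; linarith
    · obtain ⟨y1, y2⟩ := h4' d
      have e1 := k9 d
      rcases c'.lt_or_eq with e | e
      · have := k3' e; linarith
      · have := k4 (k5 (by linarith)); rw [e] at x1; linarith
  · obtain ⟨x1, x2⟩ := h4 c
    obtain ⟨y1, y2⟩ := h4' (by linarith); linarith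

theorem hk_inj (h : HA κ K M δ ε M') :
    InjOn (hk κ K M δ ε) (Icc 0 1 ×ˢ Icc M' 1) := by
  rintro ⟨t, y⟩ ⟨hp1, hp2⟩ ⟨t', y'⟩ ⟨hq1, hq2⟩ heq
  rcases lt_trichotomy y y' with hy | hy | hy
  · exact absurd heq (hk_inj_lt h hp1 hp2 hq1 hq2 hy)
  · subst hy
    rcases lt_trichotomy t t' with ht | ht | ht
    · exact absurd heq (hk_inj_t h hp1 hq1 hp2 ht)
    · rw [ht]
    · exact absurd heq.symm (hk_inj_t h hq1 hp1 hp2 ht)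
  · exact absurd heq.symm (hk_inj_lt h hq1 hq2 hp1 hp2 hy)

theorem cl_lip (u v : ℝ) : |cl u - cl v| ≤ |u - v| := by
  unfold cl
  refine (abs_max_sub_max_le_max _ _ _ _).trans ?_
  rw [sub_self, abs_zero]
  refine max_le (abs_nonneg _) ((abs_min_sub_min_le_max _ _ _ _).trans ?_)
  rw [sub_self, abs_zero]
  exact max_le le_rfl (abs_nonneg _)

theorem prod_lip {a b a' b' A B D : ℝ} (ha : |a - a'| ≤ A) (hb : |b - b'| ≤ B) (hb1 : |b| ≤ D)
    (h0 : 0 ≤ a') (h1 : a' ≤ 1) : |a * b - a' * b'| ≤ A * D + B := by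
  have e : a * b - a' * b' = (a - a') * b + a' * (b - b') := by ring
  rw [e]
  refine (abs_add_le _ _).trans (add_le_add ?_ ?_)
  · rw [abs_mul]
    exact mul_le_mul ha hb1 (abs_nonneg _) ((abs_nonneg _).trans ha)
  · rw [abs_mul, abs_of_nonneg h0]
    have := mul_le_mul h1 hb (abs_nonneg _) zero_le_one
    linarith

set_option maxHeartbeats 1000000 in
theorem hk_lip (h : HA κ K M δ ε M') {p q : ℝ × ℝ} (hp : p ∈ Icc (0:ℝ) 1 ×ˢ Icc M' 1)
    (hq : q ∈ Icc (0:ℝ) 1 ×ˢ Icc M' 1) :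
    dist (hk κ K M δ ε p) (hk κ K M δ ε q) ≤ 16 * K * dist p q := by
  obtain ⟨t, y⟩ := p
  obtain ⟨t', y'⟩ := q
  obtain ⟨⟨ht0, ht1⟩, hy0, hy1⟩ := hp
  obtain ⟨⟨ht0', ht1'⟩, hy0', hy1'⟩ := hq
  have a1 := h.κ0
  have a2 := h.κ1
  have a3 := h.δ0
  have a4 := h.δ1
  have a5 := h.ε0
  have a6 := h.ε1
  have a7 := h.M0
  have a8 := h.MM'
  have hK := h.K0
  have hK1 := h.K1
  dsimp only at *
  rw [Prod.dist_eq, Prod.dist_eq, Real.dist_eq, Real.dist_eq, Real.dist_eq, Real.dist_eq]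
  dsimp only
  have b1 : |t - t'| ≤ max |t - t'| |y - y'| := le_max_left _ _
  have b2 : |y - y'| ≤ max |t - t'| |y - y'| := le_max_right _ _
  generalize max |t - t'| |y - y'| = d at *
  have d0 : 0 ≤ d := (abs_nonneg _).trans b1
  have clu : ∀ c : ℝ, |cl (6 * K * (t - (1 - κ)) - c) - cl (6 * K * (t' - (1 - κ)) - c)| ≤ 6 * K * d := by
    intro c
    refine (cl_lip _ _).trans ?_
    have e : 6 * K * (t - (1 - κ)) - c - (6 * K * (t' - (1 - κ)) - c) = 6 * K * (t - t') := by ring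
    rw [e, abs_mul, abs_of_pos (by linarith)]
    exact mul_le_mul_of_nonneg_left b1 (by linarith)
  have hr0 : 0 ≤ ε * (1 - y) := mul_nonneg a5.le (by linarith)
  have hr1 : ε * (1 - y) ≤ κ / 16 := by nlinarith
  have hw0 : 0 ≤ δ * (1 - y) := mul_nonneg a3.le (by linarith)
  have hw1 : δ * (1 - y) ≤ δ := by nlinarith
  have eB : |(ε * (1 - y)) - (ε * (1 - y'))| ≤ ε * d := by
    rw [← mul_sub, abs_mul, abs_of_pos a5]
    refine mul_le_mul_of_nonneg_left ?_ a5.le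
    rw [show (1 - y - (1 - y')) = -(y - y') by ring, abs_neg]; exact b2
  have eD' : |(δ * (1 - y)) - (δ * (1 - y'))| ≤ δ * d := by
    rw [← mul_sub, abs_mul, abs_of_pos a3]
    refine mul_le_mul_of_nonneg_left ?_ a3.le
    rw [show (1 - y - (1 - y')) = -(y - y') by ring, abs_neg]; exact b2
  have eps1 : ε * d ≤ 1 / 16 * d := mul_le_mul_of_nonneg_right (by linarith) d0
  have del1 : δ * d ≤ 1 / 16 * d := mul_le_mul_of_nonneg_right (by linarith) d0
  have Kd : d ≤ K * d := by nlinarith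
  unfold hk
  dsimp only
  refine max_le ?_ ?_
  · have c1 := clu 0
    simp only [sub_zero] at c1
    have p1 := prod_lip (b := 1 - ε * (1 - y) - (1 - κ)) (b' := 1 - ε * (1 - y') - (1 - κ))
      (B := ε * d) (D := 1) c1 (by
        rw [show 1 - ε * (1 - y) - (1 - κ) - (1 - ε * (1 - y') - (1 - κ)) =
          -(ε * (1 - y) - ε * (1 - y')) by ring, abs_neg]; exact eB)
      (by rw [abs_le]; constructor <;> linarith) (cl_nonneg _) (cl_le_one _)
    have p2 := prod_lip (b := 1 - ε * (1 - y) - (1 - 3 / 4 * κ))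
      (b' := 1 - ε * (1 - y') - (1 - 3 / 4 * κ))
      (B := ε * d) (D := 1) (clu 2) (by
        rw [show 1 - ε * (1 - y) - (1 - 3 / 4 * κ) - (1 - ε * (1 - y') - (1 - 3 / 4 * κ)) =
          -(ε * (1 - y) - ε * (1 - y')) by ring, abs_neg]; exact eB)
      (by rw [abs_le]; constructor <;> linarith) (cl_nonneg _) (cl_le_one _)
    have p3 : |min t (1 - κ) - min t' (1 - κ)| ≤ d := by
      refine (abs_min_sub_min_le_max _ _ _ _).trans ?_
      rw [sub_self, abs_zero]; exact max_le b1 d0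
    have p4 : |δ * max (t - (1 - κ / 2)) 0 - δ * max (t' - (1 - κ / 2)) 0| ≤ δ * d := by
      rw [← mul_sub, abs_mul, abs_of_pos a3]
      refine mul_le_mul_of_nonneg_left ?_ a3.le
      refine (abs_max_sub_max_le_max _ _ _ _).trans ?_
      rw [sub_self, abs_zero, sub_sub_sub_cancel_right]; exact max_le b1 d0
    rw [abs_le] at *
    constructor <;> linarith
  · have p1 := prod_lip (b := M + δ * (1 - y) - y) (b' := M + δ * (1 - y') - y')
      (B := δ * d + d) (D := 1) (clu 1) (by
        rw [abs_le] at *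
        constructor <;> linarith)
      (by rw [abs_le]; constructor <;> linarith) (cl_nonneg _) (cl_le_one _)
    rw [abs_le] at *
    constructor <;> linarith

theorem hk_tail (h : HA κ K M δ ε M') {p q : ℝ × ℝ} (hp : 1 - κ / 2 ≤ p.1) (hq : 1 - κ / 2 ≤ q.1) :
    dist (hk κ K M δ ε p) (hk κ K M δ ε q) ≤ δ * dist p q := by
  have a3 := h.δ0
  rw [hk_ph4 h hp, hk_ph4 h hq, Prod.dist_eq, Prod.dist_eq, Real.dist_eq, Real.dist_eq,
    Real.dist_eq, Real.dist_eq]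
  dsimp only
  refine max_le ?_ ?_
  · rw [show 1 - 3 / 4 * κ - δ * (p.1 - (1 - κ / 2)) - (1 - 3 / 4 * κ - δ * (q.1 - (1 - κ / 2))) =
      -(δ * (p.1 - q.1)) by ring, abs_neg, abs_mul, abs_of_pos a3]
    exact mul_le_mul_of_nonneg_left (le_max_left _ _) a3.le
  · rw [show M + δ * (1 - p.2) - (M + δ * (1 - q.2)) =
      -(δ * (p.2 - q.2)) by ring, abs_neg, abs_mul, abs_of_pos a3]
    exact mul_le_mul_of_nonneg_left (le_max_right _ _) a3.le

end Hook
end Fan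

namespace Fan

section Maps

set_option linter.unusedSectionVars false

variable (𝕜 : Type*) [Field 𝕜] [LinearOrder 𝕜] [IsStrictOrderedRing 𝕜]

/-- hook at stage `s` -/
def hs (s : ℕ) : 𝕜 × 𝕜 → 𝕜 × 𝕜 :=
  hk ((1 / 2) ^ eD s) (2 ^ eD s) (MM 𝕜 s) ((1 / 4) ^ (NN s + 2)) ((1 / 4) ^ NN (s + 1))

def g : ℕ → 𝕜 × 𝕜 → 𝕜 × 𝕜
  | 0 => id
  | s + 1 => fun p => g s (hs 𝕜 s p)

/-- the breakpoints -/
def aa (m : ℕ) : 𝕜 := 1 - (1 / 2) ^ m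

variable {𝕜}

theorem g_succ (s : ℕ) (p : 𝕜 × 𝕜) : g 𝕜 (s + 1) p = g 𝕜 s (hs 𝕜 s p) := rfl

theorem half_pos' (n : ℕ) : (0 : ℝ) < (1 / 2) ^ n := by positivity
theorem half_le_one (n : ℕ) : ((1 : ℝ) / 2) ^ n ≤ 1 := pow_le_one₀ (by norm_num) (by norm_num)
theorem half_anti {n m : ℕ} (h : n ≤ m) : ((1 : ℝ) / 2) ^ m ≤ (1 / 2) ^ n :=
  pow_le_pow_of_le_one (by norm_num) (by norm_num) h
theorem quarter_anti {n m : ℕ} (h : n ≤ m) : ((1 : ℝ) / 4) ^ m ≤ (1 / 4) ^ n :=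
  pow_le_pow_of_le_one (by norm_num) (by norm_num) h
theorem quarter_half (n : ℕ) : ((1 : ℝ) / 4) ^ n ≤ (1 / 2) ^ n :=
  pow_le_pow_left₀ (by norm_num) (by norm_num) n

theorem aa_mono {n m : ℕ} (h : n ≤ m) : aa ℝ n ≤ aa ℝ m := by
  have := half_anti h
  unfold aa; linarith
theorem aa_lt {n m : ℕ} (h : n < m) : aa ℝ n < aa ℝ m := by
  have : ((1 : ℝ) / 2) ^ m < (1 / 2) ^ n :=
    pow_lt_pow_right_of_lt_one₀ (by norm_num) (by norm_num) h
  unfold aa; linarith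
theorem aa_nonneg (m : ℕ) : 0 ≤ aa ℝ m := by have := half_le_one m; unfold aa; linarith
theorem aa_lt_one (m : ℕ) : aa ℝ m < 1 := by have := half_pos' m; unfold aa; linarith
theorem exists_aa {t : ℝ} (h : t < 1) : ∃ m, t < aa ℝ m := by
  obtain ⟨m, hm⟩ := exists_pow_lt_of_lt_one (sub_pos.2 h) (y := (1 : ℝ) / 2) (by norm_num)
  exact ⟨m, by unfold aa; linarith⟩

theorem hs_HA (s : ℕ) : HA ((1 / 2) ^ eD s) (2 ^ eD s) (MM ℝ s) ((1 / 4) ^ (NN s + 2))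
    ((1 / 4) ^ NN (s + 1)) (MM ℝ (s + 1)) where
  κ0 := half_pos' _
  κ1 := half_le_one _
  Kκ := by rw [← mul_pow]; norm_num
  δ0 := quarter_pos _
  δ1 := (quarter_anti (show 2 ≤ NN s + 2 by omega)).trans (by norm_num)
  ε0 := quarter_pos _
  ε1 := by
    refine (quarter_half _).trans ((half_anti (show eD s + 4 ≤ NN (s + 1) by
      rw [NN_succ]; omega)).trans ?_)
    rw [pow_add]
    exact le_of_eq (by ring)
  M0 := MM_nonneg s
  MM' := by
    have := MM_step (𝕜 := ℝ) s
    have e : ((1 : ℝ) / 4) ^ (NN s + 1) = 4 * (1 / 4) ^ (NN s + 2) := by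
      rw [pow_succ _ (NN s + 1)]; ring
    linarith

/-- zone to the right of `aa m` at level `k` -/
def Zn (m k : ℕ) : Set (ℝ × ℝ) := Icc (aa ℝ m) 1 ×ˢ Icc (MM ℝ k) 1

def Dm (k : ℕ) : Set (ℝ × ℝ) := Icc 0 1 ×ˢ Icc (MM ℝ k) 1

theorem Zn_sub (m k : ℕ) : Zn m k ⊆ Dm k := prod_mono (Icc_subset_Icc (aa_nonneg m) le_rfl) le_rfl

theorem hs_maps (s : ℕ) : MapsTo (hs ℝ s) (Dm (s + 1)) (Dm s) := by
  rintro p ⟨ht, hy⟩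
  have h := hs_HA s
  have a1 := h.κ1
  have a8 := h.MM'
  have a3 := h.δ0
  have hr0 : 0 ≤ (1 / 4) ^ NN (s + 1) * (1 - p.2) := mul_nonneg h.ε0.le (by linarith [hy.2])
  have hw0 : 0 ≤ (1 / 4) ^ (NN s + 2) * (1 - p.2) := mul_nonneg h.δ0.le (by linarith [hy.2])
  have hr1 : (1 / 4) ^ NN (s + 1) * (1 - p.2) ≤ 1 := by
    refine mul_le_one₀ ?_ (by linarith [hy.2]) (by linarith [h.M0, hy.1])
    have := h.ε1; have := h.κ1; linarith
  have hw1 : (1 / 4) ^ (NN s + 2) * (1 - p.2) ≤ (1 / 4) ^ (NN s + 2) :=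
    mul_le_of_le_one_right a3.le (by linarith [h.M0, hy.1])
  have b1 := hy.1
  have b2 := hy.2
  rcases hk_path h ht hy with ⟨h1, h2, h3⟩ | ⟨h1, h2, h3⟩ | ⟨h1, h2, h3⟩ <;>
  exact ⟨⟨by unfold hs; linarith, by unfold hs; linarith⟩,
    ⟨by unfold hs; linarith, by unfold hs; linarith⟩⟩

theorem g_maps (s : ℕ) : MapsTo (g ℝ s) (Dm s) (Icc 0 1 ×ˢ Icc 0 1) := by
  induction s with
  | zero =>
    rintro p ⟨h1, h2⟩
    exact ⟨h1, (MM_nonneg 0).trans h2.1, h2.2⟩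
  | succ s ih => exact fun p hp => ih (hs_maps s hp)

theorem g_inj (s : ℕ) : InjOn (g ℝ s) (Dm s) := by
  induction s with
  | zero => exact fun p _ q _ h => h
  | succ s ih =>
    intro p hp q hq h
    exact hk_inj (hs_HA s) hp hq (ih (hs_maps s hp) (hs_maps s hq) h)

theorem g_lip (s : ℕ) {p q : ℝ × ℝ} (hp : p ∈ Dm s) (hq : q ∈ Dm s) :
    dist (g ℝ s p) (g ℝ s q) ≤ 2 ^ NN s * dist p q := by
  induction s generalizing p q with
  | zero => simp [g, NN]
  | succ s ih =>
    rw [g_succ, g_succ]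
    refine (ih (hs_maps s hp) (hs_maps s hq)).trans ?_
    have := hk_lip (hs_HA s) hp hq
    rw [NN_succ, pow_add, pow_add, mul_assoc, mul_assoc]
    refine mul_le_mul_of_nonneg_left (this.trans (le_of_eq ?_)) (by positivity)
    ring

theorem g_cont (s : ℕ) : ContinuousOn (g ℝ s) (Dm s) := by
  have : LipschitzOnWith (2 ^ NN s) (g ℝ s) (Dm s) :=
    LipschitzOnWith.of_dist_le_mul fun p hp q hq => by
      simpa using g_lip s hp hq
  exact this.continuousOn

theorem g_tail (s : ℕ) {p q : ℝ × ℝ} (hp : p ∈ Zn (eD s + 1) (s + 1))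
    (hq : q ∈ Zn (eD s + 1) (s + 1)) :
    dist (g ℝ (s + 1) p) (g ℝ (s + 1) q) ≤ (1 / 2) ^ (s + 1) := by
  rw [g_succ, g_succ]
  refine (g_lip s (hs_maps s (Zn_sub _ _ hp)) (hs_maps s (Zn_sub _ _ hq))).trans ?_
  have e : 1 - ((1:ℝ) / 2) ^ eD s / 2 = aa ℝ (eD s + 1) := by unfold aa; rw [pow_succ]; ring
  have h1 := hk_tail (hs_HA s) (p := p) (q := q) (by rw [e]; exact hp.1.1) (by rw [e]; exact hq.1.1)
  have h2 : dist p q ≤ 1 := by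
    obtain ⟨hp1, hp2⟩ := Zn_sub _ _ hp
    obtain ⟨hq1, hq2⟩ := Zn_sub _ _ hq
    have := MM_nonneg (𝕜 := ℝ) (s + 1)
    have b1 := hp1.1; have b2 := hp1.2; have b3 := hp2.1; have b4 := hp2.2
    have c1 := hq1.1; have c2 := hq1.2; have c3 := hq2.1; have c4 := hq2.2
    rw [Prod.dist_eq, Real.dist_eq, Real.dist_eq]
    refine max_le (abs_le.2 ⟨?_, ?_⟩) (abs_le.2 ⟨?_, ?_⟩) <;> linarith
  have h3 : dist (hs ℝ s p) (hs ℝ s q) ≤ (1 / 4) ^ (NN s + 2) :=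
    h1.trans (mul_le_of_le_one_right (quarter_pos _).le h2)
  refine (mul_le_mul_of_nonneg_left h3 (by positivity)).trans ?_
  have e2 : (2 : ℝ) ^ NN s * (1 / 4) ^ (NN s + 2) = (1 / 2) ^ (NN s) * (1 / 16) := by
    rw [pow_add, ← mul_assoc, ← mul_pow]; norm_num
  rw [e2]
  have h4 := half_anti (le_NN s)
  have h5 := half_pos' s
  rw [pow_succ]; linarith

/-- `g` stabilises to the left -/
theorem g_stab {m s k : ℕ} (hsk : s ≤ k) (h : ∀ i, s ≤ i → i < k → m ≤ eD i) {p : ℝ × ℝ}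
    (hp : p.1 ≤ aa ℝ m) : g ℝ k p = g ℝ s p := by
  induction k, hsk using Nat.le_induction with
  | base => rfl
  | succ k hk ih =>
    rw [g_succ]
    have : hs ℝ k p = p := by
      refine hk_ph0 (hs_HA k) (hp.trans ?_)
      exact aa_mono (h k hk k.lt_succ_self)
    rw [this]
    exact ih fun i h1 h2 => h i h1 (h2.trans k.lt_succ_self)

theorem hs_Zn {m k : ℕ} (h : m ≤ eD k) : MapsTo (hs ℝ k) (Zn m (k + 1)) (Zn m k) := by
  intro p hp
  have h0 := Zn_sub _ _ hp
  obtain ⟨h1, h2⟩ := hs_maps k h0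
  refine ⟨⟨?_, h1.2⟩, h2⟩
  refine le_trans (le_min hp.1.1 (aa_mono h)) (hk_min (hs_HA k) h0.1 h0.2)

def Settled (m s : ℕ) : Prop := ∀ k, s ≤ k → m ≤ eD k

theorem exists_settled (m : ℕ) : ∃ s, Settled m s := by
  have hf : {k | eD k < m}.Finite :=
    Set.Finite.preimage eD_inj.injOn (Set.finite_lt_nat m)
  obtain ⟨b, hb⟩ := hf.bddAbove
  refine ⟨b + 1, fun k hk => ?_⟩
  by_contra hc
  have := hb (show k ∈ {k | eD k < m} from not_le.1 hc)
  omega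

theorem Settled.mono {m s s' : ℕ} (h : Settled m s) (hs' : s ≤ s') : Settled m s' :=
  fun k hk => h k (hs'.trans hk)

def TT (m k : ℕ) : Set (ℝ × ℝ) := g ℝ k '' Zn m k

theorem TT_closed (m k : ℕ) : IsClosed (TT m k) :=
  ((isCompact_Icc.prod isCompact_Icc).image_of_continuousOn
    ((g_cont k).mono (Zn_sub m k))).isClosed

theorem TT_anti {m s k : ℕ} (h : Settled m s) (hk : s ≤ k) : TT m k ⊆ TT m s := by
  induction k, hk using Nat.le_induction with
  | base => exact le_rfl
  | succ k hk ih =>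
    rintro _ ⟨p, hp, rfl⟩
    exact ih ⟨hs ℝ k p, hs_Zn (h k hk) hp, rfl⟩

/-- minimal stages beyond `S` -/
theorem exists_min_stage (S : ℕ) : ∃ k, S ≤ k ∧ (∀ i, S ≤ i → i ≠ k → eD k + 1 ≤ eD i) := by
  classical
  have hne : ∃ n, ∃ k, S ≤ k ∧ eD k = n := ⟨_, S, le_rfl, rfl⟩
  obtain ⟨k, hk, hn⟩ := Nat.find_spec hne
  refine ⟨k, hk, fun i hi hik => ?_⟩
  have h1 := Nat.find_min' hne ⟨i, hi, rfl⟩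
  have h2 : eD i ≠ eD k := fun h => hik (eD_inj h)
  omega

theorem small_TT {ε : ℝ} (hε : 0 < ε) :
    ∃ m s, Settled m s ∧ ∀ x ∈ TT m s, ∀ y ∈ TT m s, dist x y ≤ ε := by
  obtain ⟨S, hS⟩ := exists_pow_lt_of_lt_one hε (y := (1 : ℝ) / 2) (by norm_num)
  obtain ⟨k, hk, h⟩ := exists_min_stage S
  refine ⟨eD k + 1, k + 1, fun i hi => h i (by omega) (by omega), ?_⟩
  rintro _ ⟨p, hp, rfl⟩ _ ⟨q, hq, rfl⟩
  exact (g_tail k hp hq).trans ((half_anti (by omega)).trans hS.le)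

/-- stage-`s` approximations -/
def Jn (s : ℕ) : Set (ℝ × ℝ) := Icc (1 - (1 / 4) ^ NN s) 1 ×ˢ Icc (MM ℝ s) 1
def KK (s : ℕ) : Set (ℝ × ℝ) := Icc 0 1 ×ˢ PP s ∪ Jn s
def FF (s : ℕ) : Set (ℝ × ℝ) := g ℝ s '' KK s

theorem Jn_sub (s : ℕ) : Jn s ⊆ Dm s := by
  refine prod_mono (Icc_subset_Icc ?_ le_rfl) le_rfl
  have := quarter_anti (Nat.zero_le (NN s))
  simp only [pow_zero] at this
  linarith

theorem KK_sub (s : ℕ) : KK s ⊆ Dm s :=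
  union_subset (prod_mono le_rfl (PP_sub s)) (Jn_sub s)

theorem KK_compact (s : ℕ) : IsCompact (KK s) :=
  (isCompact_Icc.prod (isCompact_Icc.of_isClosed_subset (PP_closed s) (PP_sub s))).union
    (isCompact_Icc.prod isCompact_Icc)

theorem FF_closed (s : ℕ) : IsClosed (FF s) :=
  ((KK_compact s).image_of_continuousOn ((g_cont s).mono (KK_sub s))).isClosed

theorem Jn_Zn (s : ℕ) : Jn (s + 1) ⊆ Zn (eD s + 1) (s + 1) := by
  refine prod_mono (Icc_subset_Icc ?_ le_rfl) le_rfl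
  unfold aa
  have := (quarter_half (NN (s + 1))).trans (half_anti (show eD s + 1 ≤ NN (s + 1) by
    rw [NN_succ]; omega))
  linarith

/-- the tail of stage `s+1` sits on the leg of stage `s` -/
theorem hs_tail_leg {s : ℕ} {p : ℝ × ℝ} (hp : p ∈ Zn (eD s + 1) (s + 1)) :
    aa ℝ (eD s) ≤ (hs ℝ s p).1 ∧ (hs ℝ s p).1 ≤ aa ℝ (eD s + 1) ∧
      (hs ℝ s p).2 ∈ Icc (MM ℝ s) (MM ℝ s + (1 / 4) ^ NN s) := by
  have h := hs_HA s
  have e : 1 - ((1:ℝ) / 2) ^ eD s / 2 = aa ℝ (eD s + 1) := by unfold aa; rw [pow_succ]; ring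
  have h1 := hk_ph4 h (p := p) (by rw [e]; exact hp.1.1)
  have hq : ((1:ℝ)/4) ^ (NN s + 2) ≤ (1 / 4) ^ NN s := quarter_anti (by omega)
  obtain ⟨hp1, hp2⟩ := Zn_sub _ _ hp
  have hp3 := hp.1.1
  have a4 := h.δ1
  have a3 := h.δ0
  have a1 := h.κ0
  have hw0 : 0 ≤ (1 / 4) ^ (NN s + 2) * (1 - p.2) := mul_nonneg h.δ0.le (by linarith [hp2.2])
  have hw1 : (1 / 4) ^ (NN s + 2) * (1 - p.2) ≤ (1 / 4) ^ (NN s + 2) :=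
    mul_le_of_le_one_right a3.le (by linarith [h.M0, h.MM', hp2.1])
  rw [← e] at hp3
  have hv0 : 0 ≤ (1 / 4) ^ (NN s + 2) * (p.1 - (1 - (1 / 2) ^ eD s / 2)) :=
    mul_nonneg a3.le (by linarith)
  have hv1 : (1 / 4) ^ (NN s + 2) * (p.1 - (1 - (1 / 2) ^ eD s / 2)) ≤ 1 / 16 * ((1 / 2) ^ eD s / 2) :=
    mul_le_mul a4 (by linarith [hp1.2]) (by linarith) (by norm_num)
  rw [hs, h1]
  refine ⟨?_, ?_, ?_, ?_⟩
  · unfold aa; dsimp only; linarith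
  · rw [← e]; dsimp only; linarith
  · dsimp only; linarith
  · dsimp only; linarith

theorem hs_KK (s : ℕ) : MapsTo (hs ℝ s) (KK (s + 1)) (KK s) := by
  intro p hp
  have hD := hs_maps s (KK_sub _ hp)
  rcases hp with hp | hp
  · have hy := PP_sub _ hp.2
    have h := hs_HA s
    have a3 := h.δ0
    have hq : ((1:ℝ)/4) ^ (NN s + 2) ≤ (1 / 4) ^ NN s := quarter_anti (by omega)
    have hq' : ((1:ℝ)/4) ^ NN (s + 1) ≤ (1 / 4) ^ NN s := quarter_anti (NN_mono.monotone s.le_succ)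
    have hw1 : (1 / 4) ^ (NN s + 2) * (1 - p.2) ≤ (1 / 4) ^ (NN s + 2) :=
      mul_le_of_le_one_right a3.le (by linarith [h.M0, h.MM', hy.1])
    have hr1 : (1 / 4) ^ NN (s + 1) * (1 - p.2) ≤ (1 / 4) ^ NN (s + 1) :=
      mul_le_of_le_one_right h.ε0.le (by linarith [h.M0, h.MM', hy.1])
    rcases hk_path h hp.1 hy with ⟨h1, h2, h3⟩ | ⟨h1, h2, h3⟩ | ⟨h1, h2, h3⟩
    · left
      refine ⟨hD.1, ?_⟩
      rw [show (hs ℝ s p).2 = p.2 from h1]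
      exact PP_anti s.le_succ hp.2
    · right
      refine ⟨⟨?_, hD.1.2⟩, hD.2⟩
      rw [show (hs ℝ s p).1 = _ from h1]
      linarith
    · left
      refine ⟨hD.1, leg_sub s ⟨hD.2.1, ?_⟩⟩
      rw [show (hs ℝ s p).2 = _ from h1]
      linarith
  · left
    exact ⟨hD.1, leg_sub s (hs_tail_leg (Jn_Zn s hp)).2.2⟩

theorem FF_anti {s k : ℕ} (hk : s ≤ k) : FF k ⊆ FF s := by
  induction k, hk using Nat.le_induction with
  | base => exact le_rfl
  | succ k hk ih =>
    rintro _ ⟨p, hp, rfl⟩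
    exact ih ⟨hs ℝ k p, hs_KK k hp, rfl⟩

theorem Jn_diam (s : ℕ) {p q : ℝ × ℝ} (hp : p ∈ Jn s) (hq : q ∈ Jn s) :
    dist (g ℝ s p) (g ℝ s q) ≤ (1 / 2) ^ s := by
  cases s with
  | succ s => exact g_tail s (Jn_Zn s hp) (Jn_Zn s hq)
  | zero =>
    obtain ⟨hp1, hp2⟩ := g_maps _ (Jn_sub _ hp)
    obtain ⟨hq1, hq2⟩ := g_maps _ (Jn_sub _ hq)
    have b1 := hp1.1; have b2 := hp1.2; have b3 := hp2.1; have b4 := hp2.2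
    have c1 := hq1.1; have c2 := hq1.2; have c3 := hq2.1; have c4 := hq2.2
    rw [Prod.dist_eq, Real.dist_eq, Real.dist_eq, pow_zero]
    refine max_le (abs_le.2 ⟨?_, ?_⟩) (abs_le.2 ⟨?_, ?_⟩) <;> linarith

end Maps
end Fan

namespace Fan

section Limit

open Filter Topology

def EE : Set (ℝ × ℝ) := Icc 0 1 ×ˢ PI

theorem EE_compact : IsCompact EE := isCompact_Icc.prod PI_compact

theorem EE_sub (s : ℕ) : EE ⊆ Dm s := prod_mono le_rfl fun _ hy => PP_sub s (mem_iInter.1 hy s)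

theorem EE_KK (s : ℕ) : EE ⊆ KK s := fun _ hp => Or.inl ⟨hp.1, mem_iInter.1 hp.2 s⟩

theorem EE_Zn {p : ℝ × ℝ} (hp : p ∈ EE) {m : ℕ} (hm : aa ℝ m ≤ p.1) (s : ℕ) : p ∈ Zn m s :=
  ⟨⟨hm, hp.1.2⟩, (EE_sub s hp).2⟩

theorem g_close {ε : ℝ} (hε : 0 < ε) : ∃ s, ∀ k ≥ s, ∀ p ∈ EE, dist (g ℝ k p) (g ℝ s p) ≤ ε := by
  obtain ⟨m, s, h, hd⟩ := small_TT hε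
  refine ⟨s, fun k hk p hp => ?_⟩
  rcases le_total p.1 (aa ℝ m) with hm | hm
  · rw [g_stab hk (fun i hi _ => h i hi) hm, dist_self]; exact hε.le
  · exact hd _ (TT_anti h hk ⟨p, EE_Zn hp hm k, rfl⟩) _ ⟨p, EE_Zn hp hm s, rfl⟩

theorem g_cauchy : UniformCauchySeqOn (fun k => g ℝ k) atTop EE := by
  rw [Metric.uniformCauchySeqOn_iff]
  intro ε hε
  obtain ⟨s, hs⟩ := g_close (show 0 < ε / 3 by positivity)
  refine ⟨s, fun m hm n hn p hp => ?_⟩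
  have h1 := hs m hm p hp
  have h2 := hs n hn p hp
  have := dist_triangle_right (g ℝ m p) (g ℝ n p) (g ℝ s p)
  linarith

noncomputable def ff (p : ℝ × ℝ) : ℝ × ℝ := limUnder atTop (fun k => g ℝ k p)

theorem ff_tendsto {p : ℝ × ℝ} (hp : p ∈ EE) : Tendsto (fun k => g ℝ k p) atTop (𝓝 (ff p)) :=
  (g_cauchy.cauchySeq hp).tendsto_limUnder

theorem ff_cont : ContinuousOn ff EE := by
  refine (g_cauchy.tendstoUniformlyOn_of_tendsto fun p hp => ff_tendsto hp).continuousOn ?_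
  exact Eventually.frequently (Eventually.of_forall fun k => (g_cont k).mono (EE_sub k))

theorem ff_eq {p : ℝ × ℝ} (hp : p ∈ EE) {m s : ℕ} (h : Settled m s) (hm : p.1 ≤ aa ℝ m) :
    ff p = g ℝ s p := by
  refine tendsto_nhds_unique (ff_tendsto hp) ?_
  refine tendsto_const_nhds.congr' ?_
  filter_upwards [eventually_ge_atTop s] with k hk
  exact (g_stab hk (fun i hi _ => h i hi) hm).symm

theorem ff_TT {p : ℝ × ℝ} (hp : p ∈ EE) {m s : ℕ} (h : Settled m s) (hm : aa ℝ m ≤ p.1) :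
    ff p ∈ TT m s := by
  refine (TT_closed m s).mem_of_tendsto (ff_tendsto hp) ?_
  filter_upwards [eventually_ge_atTop s] with k hk
  exact TT_anti h hk ⟨p, EE_Zn hp hm k, rfl⟩

theorem eq_of_TT {x y : ℝ × ℝ} (hx : ∀ m s, Settled m s → x ∈ TT m s)
    (hy : ∀ m s, Settled m s → y ∈ TT m s) : x = y := by
  refine eq_of_forall_dist_le fun ε hε => ?_
  obtain ⟨m, s, h, hd⟩ := small_TT hε
  exact hd _ (hx m s h) _ (hy m s h)

theorem ff_one_TT {y : ℝ} (hy : y ∈ PI) (m s : ℕ) (h : Settled m s) : ff (1, y) ∈ TT m s :=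
  ff_TT (p := (1, y)) ⟨⟨zero_le_one, le_rfl⟩, hy⟩ h (aa_lt_one m).le

theorem ff_one {y y' : ℝ} (hy : y ∈ PI) (hy' : y' ∈ PI) : ff (1, y) = ff (1, y') :=
  eq_of_TT (ff_one_TT hy) (ff_one_TT hy')

theorem ff_inj {p q : ℝ × ℝ} (hp : p ∈ EE) (hq : q ∈ EE) (h1 : p.1 < 1) (h : ff p = ff q) :
    p = q := by
  obtain ⟨m, hm⟩ := exists_aa h1
  obtain ⟨s, hs⟩ := exists_settled m
  rcases le_total q.1 (aa ℝ m) with hq' | hq'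
  · rw [ff_eq hp hs hm.le, ff_eq hq hs hq'] at h
    exact g_inj s (EE_sub s hp) (EE_sub s hq) h
  · obtain ⟨r, hr, hr'⟩ := ff_TT hq hs hq'
    rw [ff_eq hp hs hm.le, ← hr'] at h
    have := g_inj s (EE_sub s hp) (Zn_sub m s hr) h
    have h2 := hr.1.1
    rw [← this] at h2
    linarith

theorem ff_inj' {p q : ℝ × ℝ} (hp : p ∈ EE) (hq : q ∈ EE) (h : ff p = ff q) :
    p = q ∨ (p.1 = 1 ∧ q.1 = 1) := by
  rcases hp.1.2.lt_or_eq with h1 | h1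
  · exact Or.inl (ff_inj hp hq h1 h)
  rcases hq.1.2.lt_or_eq with h2 | h2
  · exact Or.inl (ff_inj hq hp h2 h.symm).symm
  · exact Or.inr ⟨h1, h2⟩

def QQ : Set (ℝ × ℝ) := ff '' EE

theorem QQ_sub_FF (s : ℕ) : QQ ⊆ FF s := by
  rintro _ ⟨p, hp, rfl⟩
  refine (FF_closed s).mem_of_tendsto (ff_tendsto hp) ?_
  filter_upwards [eventually_ge_atTop s] with k hk
  exact FF_anti hk ⟨p, EE_KK k hp, rfl⟩

theorem QQ_of_FF {z : ℝ × ℝ} (h : ∀ s, z ∈ FF s) : z ∈ QQ := by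
  by_cases hT : ∀ m s, Settled m s → z ∈ TT m s
  · obtain ⟨y, hy⟩ := PI_nonempty
    exact ⟨(1, y), ⟨⟨zero_le_one, le_rfl⟩, hy⟩, eq_of_TT (ff_one_TT hy) hT⟩
  push Not at hT
  obtain ⟨m, s, hms, hz⟩ := hT
  obtain ⟨p, hp, hpz⟩ := h s
  have key : ∀ k, s ≤ k → p ∈ KK k ∧ p.1 < aa ℝ m := by
    intro k hk
    obtain ⟨q, hq, hqz⟩ := h k
    have hqD := KK_sub k hq
    have hq1 : q.1 < aa ℝ m := by
      by_contra hc
      push Not at hc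
      exact hz (TT_anti hms hk ⟨q, ⟨⟨hc, hqD.1.2⟩, hqD.2⟩, hqz⟩)
    rw [g_stab hk (fun i hi _ => hms i hi) hq1.le] at hqz
    have hqs : q ∈ Dm s := ⟨hqD.1, (MM_mono hk).trans hqD.2.1, hqD.2.2⟩
    have := g_inj s (KK_sub s hp) hqs (hpz.trans hqz.symm)
    rw [this]
    exact ⟨hq, hq1⟩
  have hm := (key s le_rfl).2
  have hPP : ∀ k, s ≤ k → m ≤ k → p.2 ∈ PP k := by
    intro k hk hmk
    rcases (key k hk).1 with h1 | h1
    · exact h1.2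
    · exfalso
      have := h1.1.1
      have h3 := (quarter_half (NN k)).trans (half_anti (hmk.trans (le_NN k)))
      unfold aa at hm
      linarith
  have hE : p ∈ EE := by
    refine ⟨(KK_sub s hp).1, mem_iInter.2 fun k => ?_⟩
    exact PP_anti (show k ≤ k + s + m by omega) (hPP _ (by omega) (by omega))
  exact ⟨p, hE, by rw [ff_eq hE hms hm.le, hpz]⟩

theorem QQ_sub : QQ ⊆ Icc 0 1 ×ˢ Icc 0 1 := fun z hz => by
  obtain ⟨p, hp, rfl⟩ := QQ_sub_FF 0 hz
  exact g_maps 0 (KK_sub 0 hp)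

theorem QQ_nonempty : QQ.Nonempty := by
  obtain ⟨y, hy⟩ := PI_nonempty
  exact ⟨_, mem_image_of_mem _ (show ((1:ℝ), y) ∈ EE from ⟨⟨zero_le_one, le_rfl⟩, hy⟩)⟩

/-- push along the hairs -/
noncomputable def pushE (u : unitInterval) (p : EE) : EE :=
  ⟨(max p.1.1 u, p.1.2), ⟨⟨p.2.1.1.trans (le_max_left _ _), max_le p.2.1.2 u.2.2⟩, p.2.2⟩⟩

noncomputable def FE (p : EE) : QQ := ⟨ff p, mem_image_of_mem _ p.2⟩

theorem FE_cont : Continuous FE :=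
  Continuous.subtype_mk (continuousOn_iff_continuous_domRestrict.1 ff_cont) _

theorem FE_surj : Function.Surjective FE := by
  rintro ⟨_, p, hp, rfl⟩
  exact ⟨⟨p, hp⟩, rfl⟩

theorem push_cont : Continuous fun q : unitInterval × EE => pushE q.1 q.2 := by
  unfold pushE
  fun_prop

theorem push_compat (u : unitInterval) (p q : EE) (h : FE p = FE q) :
    FE (pushE u p) = FE (pushE u q) := by
  have h' : ff p = ff q := congrArg Subtype.val h
  rcases ff_inj' p.2 q.2 h' with h1 | ⟨h1, h2⟩
  · rw [Subtype.ext h1]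
  · refine Subtype.ext ?_
    change ff (max p.1.1 u, p.1.2) = ff (max q.1.1 u, q.1.2)
    rw [h1, h2, max_eq_left u.2.2]
    exact ff_one p.2.2 q.2.2

theorem QQ_contractible : ContractibleSpace QQ := by
  have : CompactSpace EE := isCompact_iff_compactSpace.1 EE_compact
  obtain ⟨y0, hy0⟩ := PI_nonempty
  let x0 : QQ := FE ⟨(1, y0), ⟨⟨zero_le_one, le_rfl⟩, hy0⟩⟩
  let G : unitInterval × EE → unitInterval × QQ := Prod.map id FE
  have hGc : Continuous G := continuous_id.prodMap FE_cont
  have hGs : Function.Surjective G := Function.surjective_id.prodMap FE_surj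
  have hGq : IsQuotientMap G := hGc.isClosedMap.isQuotientMap hGc hGs
  choose inv hinv using FE_surj
  let H : unitInterval × QQ → QQ := fun q => FE (pushE q.1 (inv q.2))
  have hH : H ∘ G = fun q => FE (pushE q.1 q.2) := by
    funext q
    exact push_compat _ _ _ (hinv _)
  have hHc : Continuous H := by
    rw [hGq.continuous_iff, hH]
    exact FE_cont.comp push_cont
  rw [contractible_iff_id_nullhomotopic]
  refine ⟨x0, ⟨⟨⟨H, hHc⟩, fun q => ?_, fun q => ?_⟩⟩⟩
  · change FE (pushE 0 (inv q)) = q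
    have : pushE 0 (inv q) = inv q := by
      refine Subtype.ext (Prod.ext ?_ rfl)
      exact max_eq_left (inv q).2.1.1
    rw [this, hinv]
  · change FE (pushE 1 (inv q)) = x0
    refine Subtype.ext ?_
    change ff (max (inv q).1.1 1, (inv q).1.2) = ff (1, y0)
    rw [max_eq_right (inv q).2.1.2]
    exact ff_one (inv q).2.2 hy0

end Limit
end Fan

namespace Fan

section NetComp

variable {α β : Type*} [Primcodable α] [Primcodable β]

/-- abbreviation for ball codes -/
abbrev BC := (ℚ × ℚ) × ℚ

theorem c_NN : Computable NN := by
  have h := Computable.nat_rec (f := fun s : ℕ => s) (g := fun _ : ℕ => 0)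
    (h := fun _ (x : ℕ × ℕ) => x.2 + eD x.1 + 4) Computable.id (Computable.const _)
    (c_add (c_add (Computable.snd.comp Computable.snd)
      (c_eD.comp (Computable.fst.comp Computable.snd))) (Computable.const 4))
  refine h.of_eq fun s => ?_
  induction s with
  | zero => rfl
  | succ n ih => simp only [ih, NN_succ]

theorem c_lam : Computable fun x : ℕ × ℕ => lam x.1 x.2 := by
  have h : ComputablePred fun x : ℕ × ℕ => ∃ k < x.1, eD k = x.2 ∧ colD k = true :=
    cp_exists_lt (P := fun x k => eD k = x.2 ∧ colD k = true) Computable.fst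
      (cp_and (cp_eq_nat (c_eD.comp Computable.snd) (Computable.snd.comp Computable.fst))
        (cp_eq_bool (c_colD.comp Computable.snd) (Computable.const true)))
  exact h.decide.of_eq fun x => by rw [lam]

theorem c_yN {X : α → ℕ → Bool} (hX : Computable fun x : α × ℕ => X x.1 x.2) {n : α → ℕ}
    (hn : Computable n) : Computable fun a => yN ℚ (X a) (n a) := by
  have e : Computable fun x : α × (ℕ × ℚ) => X x.1 x.2.1 := by
    have := hX.comp (Computable.fst.pair (Computable.fst.comp (Computable.snd (α := α) (β := ℕ × ℚ))))
    exact this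
  have e2 : Computable fun x : α × (ℕ × ℚ) =>
      x.2.2 + (bif X x.1 x.2.1 then (3:ℚ) else 1) * (1 / 4) ^ (x.2.1 + 1) := by
    refine q_add (Computable.snd.comp Computable.snd) (q_mul
      (Computable.cond e (Computable.const 3) (Computable.const 1)) (q_pow _ ?_))
    exact c_add (Computable.fst.comp Computable.snd) (Computable.const 1)
  have h := Computable.nat_rec (f := n) (g := fun _ => (0:ℚ))
    (h := fun a (x : ℕ × ℚ) => x.2 + (bif X a x.1 then (3:ℚ) else 1) * (1 / 4) ^ (x.1 + 1)) hn
    (Computable.const _) e2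
  refine h.of_eq fun a => ?_
  generalize n a = m
  induction m with
  | zero => rfl
  | succ n ih => simp only [ih, yN_succ]

theorem c_MM : Computable (MM ℚ) := by
  have := c_yN (X := lam) c_lam c_NN
  exact this

theorem q_cl {f : α → ℚ} (hf : Computable f) : Computable fun a => cl (f a) :=
  q_max (Computable.const 0) (q_min hf (Computable.const 1))

theorem c_hk {κ K M δ ε : α → ℚ} {p : α → ℚ × ℚ} (hκ : Computable κ) (hK : Computable K)
    (hM : Computable M) (hδ : Computable δ) (hε : Computable ε) (hp : Computable p) :
    Computable fun a => hk (κ a) (K a) (M a) (δ a) (ε a) (p a) := by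
  have h1 : Computable fun a => (p a).1 := Computable.fst.comp hp
  have h2 : Computable fun a => (p a).2 := Computable.snd.comp hp
  have one : Computable fun _ : α => (1:ℚ) := Computable.const 1
  have b : Computable fun a => 1 - κ a := q_sub one hκ
  have u : Computable fun a => 6 * K a * ((p a).1 - (1 - κ a)) :=
    q_mul (q_mul (Computable.const 6) hK) (q_sub h1 b)
  have e : Computable fun a => 1 - ε a * (1 - (p a).2) := q_sub one (q_mul hε (q_sub one h2))
  have x : Computable fun a => min (p a).1 (1 - κ a) + cl (6 * K a * ((p a).1 - (1 - κ a))) *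
      (1 - ε a * (1 - (p a).2) - (1 - κ a))
      - cl (6 * K a * ((p a).1 - (1 - κ a)) - 2) * (1 - ε a * (1 - (p a).2) - (1 - 3 / 4 * κ a))
      - δ a * max ((p a).1 - (1 - κ a * (1 / 2))) 0 :=
    q_sub (q_sub (q_add (q_min h1 b) (q_mul (q_cl u) (q_sub e b)))
      (q_mul (q_cl (q_sub u (Computable.const 2)))
        (q_sub e (q_sub one (q_mul (Computable.const (3 / 4)) hκ)))))
      (q_mul hδ (q_max (q_sub h1 (q_sub one (q_mul hκ (Computable.const (1 / 2)))))
        (Computable.const 0)))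
  have z : Computable fun a => (p a).2 + cl (6 * K a * ((p a).1 - (1 - κ a)) - 1) *
      (M a + δ a * (1 - (p a).2) - (p a).2) :=
    q_add h2 (q_mul (q_cl (q_sub u one)) (q_sub (q_add hM (q_mul hδ (q_sub one h2))) h2))
  refine (x.pair z).of_eq fun a => ?_
  unfold hk
  rw [mul_one_div]

theorem c_hs {s : α → ℕ} {p : α → ℚ × ℚ} (hs' : Computable s) (hp : Computable p) :
    Computable fun a => hs ℚ (s a) (p a) := by
  have e := c_eD.comp hs'
  have n := c_NN.comp hs'
  have n' := c_NN.comp (c_add hs' (Computable.const 1))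
  have h := c_hk (q_pow (1 / 2) e) (q_pow 2 e) (c_MM.comp hs')
    (q_pow (1 / 4) (c_add n (Computable.const 2))) (q_pow (1 / 4) n') hp
  exact h

def gIter (s : ℕ) (p : ℚ × ℚ) : ℕ → ℚ × ℚ
  | 0 => p
  | i + 1 => hs ℚ (s - (i + 1)) (gIter s p i)

theorem gIter_eq (s : ℕ) (p : ℚ × ℚ) (i : ℕ) (hi : i ≤ s) :
    g ℚ s p = g ℚ (s - i) (gIter s p i) := by
  induction i with
  | zero => rfl
  | succ i ih =>
    rw [ih (by omega), show s - i = s - (i + 1) + 1 by omega, g_succ]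
    rfl

theorem c_g {s : α → ℕ} {p : α → ℚ × ℚ} (hs' : Computable s) (hp : Computable p) :
    Computable fun a => g ℚ (s a) (p a) := by
  have hsub : Computable fun x : α × (ℕ × (ℚ × ℚ)) => s x.1 - (x.2.1 + 1) := by
    have := Primrec.nat_sub.to_comp.comp (hs'.comp Computable.fst)
      (c_add (Computable.fst.comp (Computable.snd (α := α) (β := ℕ × (ℚ × ℚ))))
        (Computable.const 1))
    exact this
  have e : Computable fun x : α × (ℕ × (ℚ × ℚ)) => hs ℚ (s x.1 - (x.2.1 + 1)) x.2.2 :=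
    c_hs hsub (Computable.snd.comp Computable.snd)
  have h := Computable.nat_rec (f := s) (g := p)
    (h := fun a (x : ℕ × (ℚ × ℚ)) => hs ℚ (s a - (x.1 + 1)) x.2) hs' hp e
  refine h.of_eq fun a => ?_
  rw [gIter_eq (s a) (p a) (s a) le_rfl, Nat.sub_self]
  have : ∀ n, (Nat.rec (p a) (fun y IH => hs ℚ (s a - (y + 1)) IH) n : ℚ × ℚ) = gIter (s a) (p a) n := by
    intro n
    induction n with
    | zero => rfl
    | succ n ih => simp only [ih, gIter]
  exact this (s a)

variable (𝕜 : Type*) [Field 𝕜] [LinearOrder 𝕜] [IsStrictOrderedRing 𝕜] in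
/-- net points -/
def npt (s j k : ℕ) : 𝕜 × 𝕜 := ((j : 𝕜) * (1 / 4) ^ NN s, yN 𝕜 (Nat.testBit k) (NN s))

/-- the image of the net point is far from the ball with code `c` -/
def farQ (c : BC) (s j k : ℕ) : Prop :=
  c.2 + (1 / 2) ^ s ≤ max (max ((g ℚ s (npt ℚ s j k)).1 - c.1.1) (c.1.1 - (g ℚ s (npt ℚ s j k)).1))
    (max ((g ℚ s (npt ℚ s j k)).2 - c.1.2) (c.1.2 - (g ℚ s (npt ℚ s j k)).2))

theorem c_npt1 {s j : α → ℕ} (hs' : Computable s) (hj : Computable j) :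
    Computable fun a => ((j a : ℚ) * (1 / 4) ^ NN (s a)) := by
  have h1 := c_ratcast.comp hj
  exact q_mul h1 (q_pow (1 / 4) (c_NN.comp hs'))

theorem c_npt {s j k : α → ℕ} (hs' : Computable s) (hj : Computable j) (hk' : Computable k) :
    Computable fun a => npt ℚ (s a) (j a) (k a) := by
  have h2 : Computable fun a => yN ℚ (Nat.testBit (k a)) (NN (s a)) :=
    c_yN (X := fun a => Nat.testBit (k a)) (c_testBit (hk'.comp Computable.fst) Computable.snd)
      (c_NN.comp hs')
  exact (c_npt1 hs' hj).pair h2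

theorem cp_far {c : α → BC} {s j k : α → ℕ} (hc : Computable c) (hs' : Computable s)
    (hj : Computable j) (hk' : Computable k) :
    ComputablePred fun a => farQ (c a) (s a) (j a) (k a) := by
  have hg : Computable fun a => g ℚ (s a) (npt ℚ (s a) (j a) (k a)) := c_g hs' (c_npt hs' hj hk')
  have hg1 : Computable fun a => (g ℚ (s a) (npt ℚ (s a) (j a) (k a))).1 := Computable.fst.comp hg
  have hg2 : Computable fun a => (g ℚ (s a) (npt ℚ (s a) (j a) (k a))).2 := Computable.snd.comp hg
  have c1 : Computable fun a => (c a).1.1 := Computable.fst.comp (Computable.fst.comp hc)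
  have c2 : Computable fun a => (c a).1.2 := Computable.snd.comp (Computable.fst.comp hc)
  have c3 : Computable fun a => (c a).2 := Computable.snd.comp hc
  unfold farQ
  exact q_le (q_add c3 (q_pow (1 / 2) hs')) (q_max (q_max (q_sub hg1 c1) (q_sub c1 hg1))
    (q_max (q_sub hg2 c2) (q_sub c2 hg2)))

theorem cp_valid {s k : α → ℕ} (hs' : Computable s) (hk' : Computable k) :
    ComputablePred fun a => Valid (s a) (Nat.testBit (k a)) := by
  unfold Valid
  exact cp_forall_lt (P := fun a i => Nat.testBit (k a) (eD i) = colD i) hs'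
    (cp_eq_bool (c_testBit (hk'.comp Computable.fst) (c_eD.comp Computable.snd))
      (c_colD.comp Computable.snd))

/-- all net points satisfying `P` are far -/
def NetFar (P : ℕ → ℕ → Prop) (c : BC) (s : ℕ) : Prop :=
  ∀ j < 4 ^ NN s + 1, ∀ k < 2 ^ NN s, Valid s (Nat.testBit k) ∧ P j k → farQ c s j k

theorem cp_net {P : α → ℕ → ℕ → Prop} {c : α → BC} {s : α → ℕ} (hc : Computable c)
    (hs' : Computable s) (hP : ComputablePred fun x : (α × ℕ) × ℕ => P x.1.1 x.1.2 x.2) :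
    ComputablePred fun a => NetFar (P a) (c a) (s a) := by
  unfold NetFar
  have n := c_NN.comp hs'
  have pr : Computable fun x : (α × ℕ) × ℕ => x.1.1 := Computable.fst.comp Computable.fst
  have prj : Computable fun x : (α × ℕ) × ℕ => x.1.2 := Computable.snd.comp Computable.fst
  have prk : Computable fun x : (α × ℕ) × ℕ => x.2 := Computable.snd
  have inner : ComputablePred fun x : (α × ℕ) × ℕ =>
      (Valid (s x.1.1) (Nat.testBit x.2) ∧ P x.1.1 x.1.2 x.2 → farQ (c x.1.1) (s x.1.1) x.1.2 x.2) :=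
    cp_imp (cp_and (cp_valid (hs'.comp pr) prk) hP) (cp_far (hc.comp pr) (hs'.comp pr) prj prk)
  have mid : ComputablePred fun x : α × ℕ => ∀ k < 2 ^ NN (s x.1),
      (Valid (s x.1) (Nat.testBit k) ∧ P x.1 x.2 k → farQ (c x.1) (s x.1) x.2 k) :=
    cp_forall_lt (P := fun (x : α × ℕ) k => Valid (s x.1) (Nat.testBit k) ∧ P x.1 x.2 k →
      farQ (c x.1) (s x.1) x.2 k)
      (c_pow (Computable.const 2) (n.comp Computable.fst)) inner
  exact cp_forall_lt (P := fun a j => ∀ k < 2 ^ NN (s a),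
      (Valid (s a) (Nat.testBit k) ∧ P a j k → farQ (c a) (s a) j k))
    (c_add (c_pow (Computable.const 4) n) (Computable.const 1)) mid

theorem re_or {p q : α → Prop} (hp : REPred p) (hq : REPred q) : REPred fun a => p a ∨ q a := by
  obtain ⟨f, hf, h1⟩ := re_iff_exists_computable hp
  obtain ⟨f', hf', h2⟩ := re_iff_exists_computable hq
  have h : Computable₂ fun a n => f a n || f' a n := Primrec.or.to_comp.comp hf hf'
  refine (re_of_exists_nat h).of_eq fun a => ?_
  simp only [Bool.or_eq_true, h1, h2, exists_or]

end NetComp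
end Fan

namespace Fan

section Final

def toR (p : ℚ × ℚ) : ℝ × ℝ := ((p.1 : ℝ), (p.2 : ℝ))

theorem cl_cast (u : ℚ) : ((cl u : ℚ) : ℝ) = cl (u : ℝ) := by
  unfold cl; push_cast; rfl

theorem hk_cast (κ K M δ ε : ℚ) (p : ℚ × ℚ) :
    toR (hk κ K M δ ε p) = hk (κ : ℝ) K M δ ε (toR p) := by
  unfold hk toR
  ext
  · dsimp only; push_cast [cl_cast]; rfl
  · dsimp only; push_cast [cl_cast]; rfl

theorem yN_cast (X : ℕ → Bool) (n : ℕ) : ((yN ℚ X n : ℚ) : ℝ) = yN ℝ X n := by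
  induction n with
  | zero => simp [yN]
  | succ n ih => rw [yN_succ, yN_succ, ← ih]; cases X n <;> simp only [cond_true, cond_false] <;> push_cast <;> rfl

theorem MM_cast (s : ℕ) : ((MM ℚ s : ℚ) : ℝ) = MM ℝ s := yN_cast _ _

theorem hs_cast (s : ℕ) (p : ℚ × ℚ) : toR (hs ℚ s p) = hs ℝ s (toR p) := by
  unfold hs
  rw [hk_cast, MM_cast]
  push_cast
  rfl

theorem g_cast (s : ℕ) (p : ℚ × ℚ) : toR (g ℚ s p) = g ℝ s (toR p) := by
  induction s generalizing p with
  | zero => rfl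
  | succ s ih => rw [g_succ, g_succ, ih, hs_cast]

theorem npt_cast (s j k : ℕ) : toR (npt ℚ s j k) = npt ℝ s j k := by
  unfold npt toR
  ext
  · push_cast; rfl
  · exact yN_cast _ _

theorem farQ_iff (c : BC) (s j k : ℕ) : farQ c s j k ↔
    (c.2 : ℝ) + (1 / 2) ^ s ≤ dist (g ℝ s (npt ℝ s j k)) (toR c.1) := by
  rw [← npt_cast, ← g_cast, farQ]
  generalize g ℚ s (npt ℚ s j k) = q
  rw [Prod.dist_eq, Real.dist_eq, Real.dist_eq, abs_eq_max_neg, abs_eq_max_neg, neg_sub, neg_sub]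
  rw [← Rat.cast_le (K := ℝ)]
  unfold toR
  push_cast
  rfl

theorem mem_ball_iff (z : ℝ × ℝ) (c : BC) : z ∈ ballOfCode c ↔ dist z (toR c.1) < c.2 := Iff.rfl

theorem npt_KK {s j k : ℕ} (hj : j < 4 ^ NN s + 1) (hk' : Valid s (Nat.testBit k)) :
    npt ℝ s j k ∈ Icc (0:ℝ) 1 ×ˢ PP s := by
  have h4 : (0:ℝ) < 4 ^ NN s := by positivity
  refine ⟨⟨?_, ?_⟩, ⟨_, hk', ?_, ?_⟩⟩
  · unfold npt; positivity
  · unfold npt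
    have : (j : ℝ) ≤ 4 ^ NN s := by exact_mod_cast Nat.lt_succ_iff.1 hj
    dsimp only
    rw [one_div, inv_pow, ← div_eq_mul_inv, div_le_one h4]
    exact this
  · exact le_rfl
  · have := quarter_pos (𝕜 := ℝ) (NN s)
    unfold npt; dsimp only; linarith

theorem two_quarter (n : ℕ) : (2:ℝ) ^ n * (1 / 4) ^ n = (1 / 2) ^ n := by
  rw [← mul_pow]; norm_num

theorem net_near {s : ℕ} {X : ℕ → Bool} (hX : Valid s X) {p : ℝ × ℝ} (h1 : p.1 ∈ Icc (0:ℝ) 1)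
    (h2 : p.2 ∈ cyl X (NN s)) : ∃ j < 4 ^ NN s + 1, ∃ k < 2 ^ NN s,
      Valid s (Nat.testBit k) ∧ (∀ i < NN s, Nat.testBit k i = X i) ∧ (npt ℝ s j k).1 ≤ p.1 ∧
      dist (g ℝ s p) (g ℝ s (npt ℝ s j k)) ≤ (1 / 2) ^ s := by
  obtain ⟨k, hk', hbit⟩ := bits_exist X (NN s)
  have hv : Valid s (Nat.testBit k) := hX.congr fun n hn => (hbit n hn).symm
  have h4 : (0:ℝ) < 4 ^ NN s := by positivity
  have hq : ((1:ℝ) / 4) ^ NN s = 1 / 4 ^ NN s := by rw [one_div_pow]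
  have hn0 : 0 ≤ p.1 * 4 ^ NN s := mul_nonneg h1.1 h4.le
  have f1 := Nat.floor_le hn0
  have f2 := Nat.lt_floor_add_one (p.1 * 4 ^ NN s)
  set j := ⌊p.1 * 4 ^ NN s⌋₊ with hjdef
  have hj : j < 4 ^ NN s + 1 := by
    rw [Nat.lt_succ_iff]
    have : (j : ℝ) ≤ 4 ^ NN s := f1.trans (mul_le_of_le_one_left h4.le h1.2)
    exact_mod_cast this
  have e1 : (npt ℝ s j k).1 = j / 4 ^ NN s := by unfold npt; rw [hq, mul_one_div]
  have g1 : (npt ℝ s j k).1 ≤ p.1 := by rw [e1, div_le_iff₀ h4]; exact f1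
  have g2 : p.1 ≤ (npt ℝ s j k).1 + (1 / 4) ^ NN s := by
    rw [e1, hq, ← add_div, le_div_iff₀ h4]; exact f2.le
  have e2 : (npt ℝ s j k).2 = yN ℝ X (NN s) := yN_congr _ hbit
  refine ⟨j, hj, k, hk', hv, hbit, g1, ?_⟩
  have hpD : p ∈ Dm s := KK_sub s (Or.inl ⟨h1, X, hX, h2⟩)
  have hnD : npt ℝ s j k ∈ Dm s := KK_sub s (Or.inl (npt_KK hj hv))
  refine (g_lip s hpD hnD).trans ?_
  have hd : dist p (npt ℝ s j k) ≤ (1 / 4) ^ NN s := by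
    have := quarter_pos (𝕜 := ℝ) (NN s)
    have b1 := h2.1
    have b2 := h2.2
    rw [Prod.dist_eq, Real.dist_eq, Real.dist_eq, e2]
    refine max_le (abs_le.2 ⟨?_, ?_⟩) (abs_le.2 ⟨?_, ?_⟩) <;> linarith
  refine (mul_le_mul_of_nonneg_left hd (by positivity)).trans ?_
  rw [two_quarter]
  exact half_anti (le_NN s)

theorem net_near_KK {s : ℕ} {p : ℝ × ℝ} (hp : p ∈ KK s) :
    ∃ j < 4 ^ NN s + 1, ∃ k < 2 ^ NN s, Valid s (Nat.testBit k) ∧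
      dist (g ℝ s p) (g ℝ s (npt ℝ s j k)) ≤ (1 / 2) ^ s := by
  rcases hp with ⟨h1, X, hX, h2⟩ | hp
  · obtain ⟨j, hj, k, hk', hv, -, -, hd⟩ := net_near hX h1 h2
    exact ⟨j, hj, k, hk', hv, hd⟩
  · obtain ⟨k, hk', hbit⟩ := bits_exist (lam s) (NN s)
    have hv : Valid s (Nat.testBit k) := (lam_valid s).congr fun n hn => (hbit n hn).symm
    refine ⟨4 ^ NN s, Nat.lt_succ_self _, k, hk', hv, Jn_diam s hp ?_⟩
    have e1 : (npt ℝ s (4 ^ NN s) k).1 = 1 := by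
      unfold npt; push_cast; rw [← mul_pow]; norm_num
    have e2 : (npt ℝ s (4 ^ NN s) k).2 = MM ℝ s := yN_congr _ hbit
    have := quarter_pos (𝕜 := ℝ) (NN s)
    have := MM_leg_le (𝕜 := ℝ) s
    refine ⟨?_, ?_⟩
    · rw [e1]; exact ⟨by linarith, le_rfl⟩
    · rw [e2]; exact ⟨le_rfl, by linarith⟩

/-- soundness of far tests -/
theorem far_absurd {c : BC} {s j k : ℕ} {z : ℝ × ℝ} (hz : z ∈ ballOfCode c)
    (hd : dist z (g ℝ s (npt ℝ s j k)) ≤ (1 / 2) ^ s) (hf : farQ c s j k) : False := by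
  rw [farQ_iff] at hf
  rw [mem_ball_iff] at hz
  have := dist_triangle_left (g ℝ s (npt ℝ s j k)) (toR c.1) z
  linarith

/-- separation of a point from a closed set by a rational ball -/
theorem sep {C : Set (ℝ × ℝ)} (hC : IsClosed C) {z : ℝ × ℝ} (hz : z ∉ C) (s1 : ℕ) :
    ∃ c : BC, ∃ s, s1 ≤ s ∧ z ∈ ballOfCode c ∧ ∀ x ∈ C, (c.2 : ℝ) + (1 / 2) ^ s ≤ dist x (toR c.1) := by
  obtain ⟨ε, hε, hb⟩ := Metric.isOpen_iff.1 hC.isOpen_compl z hz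
  obtain ⟨r, hr0, hr1⟩ := exists_rat_btwn (show (0:ℝ) < ε / 3 by positivity)
  obtain ⟨a, ha0, ha1⟩ := exists_rat_btwn (show z.1 - r < z.1 by linarith)
  obtain ⟨b, hb0, hb1⟩ := exists_rat_btwn (show z.2 - r < z.2 by linarith)
  obtain ⟨n, hn⟩ := exists_pow_lt_of_lt_one (show (0:ℝ) < ε / 3 by positivity)
    (y := (1 : ℝ) / 2) (by norm_num)
  have hzc : dist z (toR (a, b)) < r := by
    rw [Prod.dist_eq, Real.dist_eq, Real.dist_eq]
    unfold toR
    refine max_lt (abs_lt.2 ⟨?_, ?_⟩) (abs_lt.2 ⟨?_, ?_⟩) <;> dsimp only <;> linarith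
  refine ⟨((a, b), r), n + s1, by omega, hzc, fun x hx => ?_⟩
  have h1 : ε ≤ dist x z := by
    by_contra hc
    exact hb (mem_ball.2 (not_le.1 hc)) hx
  have h2 := half_anti (show n ≤ n + s1 by omega)
  have h3 := dist_triangle_right x z (toR (a, b))
  dsimp only
  linarith

theorem QQ_pi01 : IsPi01Closed QQ := by
  refine ⟨fun c => ∃ s, NetFar (fun _ _ => True) c s, ?_, ?_⟩
  · have h : ComputablePred fun x : BC × ℕ => NetFar (fun _ _ => True) x.1 x.2 :=
      cp_net (P := fun _ _ _ => True) Computable.fst Computable.snd ((cp_eq_nat (Computable.const 0) (Computable.const 0)).of_eq fun _ => by simp)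
    exact re_exists (R := fun c s => NetFar (fun _ _ => True) c s) h.to_re
  · ext z
    simp only [mem_sdiff, mem_univ, true_and, mem_iUnion, not_exists, mem_ofPred_eq]
    constructor
    · rintro hz c ⟨s, hc⟩ hzc
      obtain ⟨p, hp, rfl⟩ := QQ_sub_FF s hz
      obtain ⟨j, hj, k, hk', hv, hd⟩ := net_near_KK hp
      exact far_absurd hzc hd (hc j hj k hk' ⟨hv, trivial⟩)
    · intro h
      refine QQ_of_FF fun s1 => ?_
      by_contra hz
      obtain ⟨c, s, hs1, hzc, hC⟩ := sep (FF_closed s1) hz s1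
      refine h c ⟨s, fun j hj k _ hv => ?_⟩ hzc
      rw [farQ_iff]
      exact hC _ (FF_anti hs1 ⟨_, Or.inl (npt_KK hj hv.1), rfl⟩)

/-- points on the hairs are not computable -/
theorem hair_not_computable {p : ℝ × ℝ} (hp : p ∈ EE) (h1 : p.1 < 1) :
    ¬ IsComputablePoint (ff p) := by
  intro hcomp
  obtain ⟨m, hm⟩ := exists_aa h1
  obtain ⟨s0, hs0⟩ := exists_settled m
  obtain ⟨X, hX, hcyl⟩ := PI_mem hp.2
  have hval : ∀ s, Valid s X := fun s k _ => hX k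
  have hz : ∀ s, s0 ≤ s → ff p = g ℝ s p := fun s hs' => ff_eq hp (hs0.mono hs') hm.le
  let P : ℕ × Bool → ℕ → ℕ → ℕ → Prop := fun x s j k =>
    (j : ℚ) * (1 / 4) ^ NN s ≤ aa ℚ m ∧ ¬ Nat.testBit k x.1 = x.2
  have hPR : ∀ x s j k, P x s j k ↔ ((npt ℝ s j k).1 ≤ aa ℝ m ∧ ¬ Nat.testBit k x.1 = x.2) := by
    intro x s j k
    refine and_congr ?_ Iff.rfl
    rw [← Rat.cast_le (K := ℝ)]
    unfold aa npt
    push_cast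
    rfl
  refine no_sep_re X ?_ hX
  have main : ∀ x : ℕ × Bool, (∃ c : BC, ∃ s, (ff p ∈ ballOfCode c) ∧
      (s0 ≤ s ∧ x.1 < s ∧ NetFar (P x s) c s)) ↔ X x.1 = x.2 := by
    rintro ⟨n, i⟩
    constructor
    · rintro ⟨c, s, hzc, hs', hn, hfar⟩
      by_contra hne
      obtain ⟨j, hj, k, hk', hv, hbit, hle, hd⟩ := net_near (hval s) hp.1 (hcyl s)
      rw [← hz s hs'] at hd
      refine far_absurd hzc hd (hfar j hj k hk' ⟨hv, ?_⟩)
      rw [hPR]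
      refine ⟨hle.trans hm.le, ?_⟩
      rw [hbit n (hn.trans_le (le_NN s))]
      exact hne
    · intro heq
      dsimp only at heq
      let s1 := s0 + n + 1
      let C0 : Set (ℝ × ℝ) := Icc 0 (aa ℝ m) ×ˢ
        {y | ∃ X', (Valid s1 X' ∧ ¬ X' n = i) ∧ y ∈ cyl X' (NN s1)}
      have hC0 : C0 ⊆ Dm s1 := by
        rintro q ⟨hq1, X', ⟨hv, -⟩, hq2⟩
        exact KK_sub s1 (Or.inl ⟨⟨hq1.1, hq1.2.trans (aa_lt_one m).le⟩, X', hv, hq2⟩)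
      have hCc : IsCompact C0 := by
        refine (isCompact_Icc.prod (isCompact_Icc (a := (MM ℝ s1)) (b := 1))).of_isClosed_subset
          (isClosed_Icc.prod (closed_cyl _ _)) fun q hq => ⟨hq.1, (hC0 hq).2⟩
      have hCl : IsClosed (g ℝ s1 '' C0) :=
        (hCc.image_of_continuousOn ((g_cont s1).mono hC0)).isClosed
      have hnot : ff p ∉ g ℝ s1 '' C0 := by
        rintro ⟨q, hq, hqz⟩
        rw [hz s1 (by omega)] at hqz
        have := g_inj s1 (hC0 hq) (EE_sub s1 hp) hqz
        subst this
        obtain ⟨-, X', ⟨-, hne⟩, hy⟩ := hq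
        refine hne ?_
        rw [cyl_disj hy (hcyl s1) (show n < NN s1 from lt_of_lt_of_le (by omega) (le_NN s1))]
        exact heq
      obtain ⟨c, s, hs1, hzc, hC⟩ := sep hCl hnot s1
      refine ⟨c, s, hzc, by omega, by dsimp only; omega, fun j hj k _ hv => ?_⟩
      rw [farQ_iff]
      obtain ⟨hv, hP⟩ := hv
      rw [hPR] at hP
      have hK := npt_KK hj hv
      refine hC _ ⟨npt ℝ s j k, ⟨⟨hK.1.1, hP.1⟩, _, ⟨hv.mono hs1, hP.2⟩, ?_⟩, ?_⟩
      · refine cyl_anti _ (NN_mono.monotone hs1) ⟨le_rfl, ?_⟩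
        have := quarter_pos (𝕜 := ℝ) (NN s)
        unfold npt; dsimp only; linarith
      · exact (g_stab hs1 (fun i hi _ => hs0 i (by omega)) hP.1).symm
  refine REPred.of_eq ?_ main
  have e1 : Computable fun y : ((ℕ × Bool) × BC) × ℕ => y.1.1 := Computable.fst.comp Computable.fst
  have e2 : Computable fun y : ((ℕ × Bool) × BC) × ℕ => y.1.2 := Computable.snd.comp Computable.fst
  have e3 : Computable fun y : ((ℕ × Bool) × BC) × ℕ => y.2 := Computable.snd
  have hnet : ComputablePred fun y : ((ℕ × Bool) × BC) × ℕ => NetFar (P y.1.1 y.2) y.1.2 y.2 := by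
    refine cp_net (P := fun y => P y.1.1 y.2) e2 e3 ?_
    have f1 : Computable fun x : ((((ℕ × Bool) × BC) × ℕ) × ℕ) × ℕ => x.1.1.1.1 :=
      e1.comp (Computable.fst.comp Computable.fst)
    have f2 : Computable fun x : ((((ℕ × Bool) × BC) × ℕ) × ℕ) × ℕ => x.1.1.2 :=
      e3.comp (Computable.fst.comp Computable.fst)
    have f3 : Computable fun x : ((((ℕ × Bool) × BC) × ℕ) × ℕ) × ℕ => x.1.2 :=
      Computable.snd.comp Computable.fst
    exact cp_and (q_le (c_npt1 f2 f3) (Computable.const (aa ℚ m)))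
      (cp_eq_bool (c_testBit Computable.snd (Computable.fst.comp f1)) (Computable.snd.comp f1)).not
  have hdec : ComputablePred fun y : ((ℕ × Bool) × BC) × ℕ =>
      s0 ≤ y.2 ∧ y.1.1.1 < y.2 ∧ NetFar (P y.1.1 y.2) y.1.2 y.2 :=
    cp_and (cp_le_nat (Computable.const s0) e3)
      (cp_and (cp_lt_nat (Computable.fst.comp e1) e3) hnet)
  have hre := re_and (re_comp hcomp e2) hdec.to_re
  exact re_exists (R := fun (x : ℕ × Bool) (c : BC) => ∃ s, (ff p ∈ ballOfCode c) ∧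
      (s0 ≤ s ∧ x.1 < s ∧ NetFar (P x s) c s))
    (re_exists (R := fun (y : (ℕ × Bool) × BC) s => (ff p ∈ ballOfCode y.2) ∧
      (s0 ≤ s ∧ y.1.1 < s ∧ NetFar (P y.1 s) y.2 s)) hre)

end Final
end Fan

namespace Fan

section Apex

/-- the net condition used at the apex -/
def PA (n s j : ℕ) : Prop := (j : ℚ) * (1 / 4) ^ NN s ≤ aa ℚ (n + 1)

theorem PA_iff (n s j k : ℕ) : PA n s j ↔ (npt ℝ s j k).1 ≤ aa ℝ (n + 1) := by
  unfold PA
  rw [← Rat.cast_le (K := ℝ)]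
  unfold aa npt
  push_cast
  rfl

theorem apex_sound {y : ℝ} (hy : y ∈ PI) {n s : ℕ} {c : BC} (hc : ff (1, y) ∈ ballOfCode c)
    (hfar : NetFar (fun j _ => PA n s j) c s) : ∀ k, s ≤ k → n < eD k := by
  obtain ⟨k, hsk, hmin⟩ := exists_min_stage s
  have hkey : n < eD k := by
    by_contra hle
    rw [not_lt] at hle
    have hset : Settled (eD k + 1) (k + 1) := fun i hi => hmin i (by omega) (by omega)
    obtain ⟨q, hq, hqz⟩ := ff_one_TT hy _ _ hset
    rw [g_succ] at hqz
    obtain ⟨l1, l2, l3⟩ := hs_tail_leg hq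
    generalize hs ℝ k q = p at hqz l1 l2 l3
    rw [g_stab hsk (m := eD k + 1) (fun i h1 h2 => hmin i h1 (by omega)) l2] at hqz
    obtain ⟨X, hX, hcyl⟩ := PP_anti hsk (leg_sub k l3)
    obtain ⟨j, hj, k', hk', hv, -, hle', hd⟩ := net_near hX
      ⟨(aa_nonneg _).trans l1, l2.trans (aa_lt_one _).le⟩ hcyl
    rw [hqz] at hd
    refine far_absurd hc hd (hfar j hj k' hk' ⟨hv, ?_⟩)
    refine (PA_iff n s j k').2 ?_
    exact hle'.trans (l2.trans (aa_mono (by omega)))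
  intro i hi
  by_cases h : i = k
  · rw [h]; exact hkey
  · have := hmin i hi h
    omega

theorem apex_complete {y : ℝ} (hy : y ∈ PI) (n : ℕ) : ∃ c : BC, ∃ s, ff (1, y) ∈ ballOfCode c ∧
    NetFar (fun j _ => PA n s j) c s := by
  obtain ⟨s1, hs1⟩ := exists_settled (n + 2)
  obtain ⟨q, hq, hqz⟩ := ff_one_TT hy _ _ hs1
  let C0 : Set (ℝ × ℝ) := Icc 0 (aa ℝ (n + 1)) ×ˢ PP s1
  have hC0 : C0 ⊆ Dm s1 := fun p hp =>
    KK_sub s1 (Or.inl ⟨⟨hp.1.1, hp.1.2.trans (aa_lt_one _).le⟩, hp.2⟩)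
  have hCc : IsCompact C0 := by
    refine (isCompact_Icc.prod (isCompact_Icc (a := (MM ℝ s1)) (b := 1))).of_isClosed_subset
      (isClosed_Icc.prod (PP_closed s1)) fun q hq => ⟨hq.1, (hC0 hq).2⟩
  have hCl : IsClosed (g ℝ s1 '' C0) :=
    (hCc.image_of_continuousOn ((g_cont s1).mono hC0)).isClosed
  have hnot : ff (1, y) ∉ g ℝ s1 '' C0 := by
    rintro ⟨p, hp, hpz⟩
    rw [← hqz] at hpz
    have := g_inj s1 (hC0 hp) (Zn_sub _ _ hq) hpz
    subst this
    have h1 := hp.1.2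
    have h2 := hq.1.1
    have h3 := aa_lt (show n + 1 < n + 2 by omega)
    linarith
  obtain ⟨c, s, hs, hzc, hC⟩ := sep hCl hnot s1
  refine ⟨c, s, hzc, fun j hj k _ hv => ?_⟩
  obtain ⟨hv, hP⟩ := hv
  rw [PA_iff n s j k] at hP
  rw [farQ_iff]
  have hK := npt_KK hj hv
  refine hC _ ⟨npt ℝ s j k, ⟨⟨hK.1.1, hP⟩, PP_anti hs hK.2⟩, ?_⟩
  exact (g_stab hs (fun i hi _ => (Nat.le_succ _).trans (hs1 i hi)) hP).symm

theorem cp_PA {α : Type*} [Primcodable α] {n s j : α → ℕ} (hn : Computable n)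
    (hs' : Computable s) (hj : Computable j) : ComputablePred fun a => PA (n a) (s a) (j a) := by
  have h1 : Computable fun a => n a + 1 := c_add hn (Computable.const 1)
  have h2 : Computable fun a => aa ℚ (n a + 1) := q_sub (Computable.const 1) (q_pow (1 / 2) h1)
  have h3 : Computable fun a => (j a : ℚ) * (1 / 4) ^ NN (s a) := c_npt1 hs' hj
  exact q_le h3 h2

theorem cp_netPA {α : Type*} [Primcodable α] {n s : α → ℕ} {c : α → BC} (hn : Computable n)
    (hc : Computable c) (hs' : Computable s) :
    ComputablePred fun a => NetFar (fun j _ => PA (n a) (s a) j) (c a) (s a) := by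
  have f1 : Computable fun x : (α × ℕ) × ℕ => n x.1.1 :=
    hn.comp (Computable.fst.comp Computable.fst)
  have f2 : Computable fun x : (α × ℕ) × ℕ => s x.1.1 :=
    hs'.comp (Computable.fst.comp Computable.fst)
  have f3 : Computable fun x : (α × ℕ) × ℕ => x.1.2 := Computable.snd.comp Computable.fst
  exact cp_net (P := fun a j _ => PA (n a) (s a) j) hc hs' (cp_PA f1 f2 f3)

theorem apex_not_computable {y : ℝ} (hy : y ∈ PI) : ¬ IsComputablePoint (ff (1, y)) := by
  classical
  intro hcomp
  let X : ℕ → Bool := fun n => decide (∃ k, eD k = n ∧ colD k = true)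
  have hX : ∀ k, X (eD k) = colD k := by
    intro k
    cases hc : colD k with
    | true => exact decide_eq_true ⟨k, rfl, hc⟩
    | false =>
      refine decide_eq_false ?_
      rintro ⟨j, h1, h2⟩
      rw [eD_inj h1, hc] at h2
      cases h2
  refine no_sep_re X ?_ hX
  have main : ∀ x : ℕ × Bool, ((∃ k, eD k = x.1 ∧ colD k = x.2) ∨
      (∃ c : BC, ∃ s, (ff (1, y) ∈ ballOfCode c) ∧ (x.2 = false ∧ (∀ k < s, ¬ eD k = x.1) ∧
        NetFar (fun j _ => PA x.1 s j) c s))) ↔ X x.1 = x.2 := by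
    rintro ⟨n, i⟩
    dsimp only
    constructor
    · rintro (⟨k, rfl, rfl⟩ | ⟨c, s, hc, rfl, hlt', hfar⟩)
      · exact hX k
      · refine decide_eq_false ?_
        rintro ⟨k, h1, -⟩
        rcases lt_or_ge k s with h | h
        · exact hlt' k h h1
        · have := apex_sound hy hc hfar k h
          omega
    · intro h
      by_cases hk : ∃ k, eD k = n
      · obtain ⟨k, rfl⟩ := hk
        exact Or.inl ⟨k, rfl, (hX k).symm.trans h⟩
      · right
        obtain ⟨c, s, hc, hfar⟩ := apex_complete hy n
        refine ⟨c, s, hc, ?_, fun k _ hk' => hk ⟨k, hk'⟩, hfar⟩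
        rw [← h]
        exact decide_eq_false fun ⟨k, h1, _⟩ => hk ⟨k, h1⟩
  refine REPred.of_eq ?_ main
  refine re_or ?_ ?_
  · refine re_exists (R := fun (x : ℕ × Bool) (k : ℕ) => eD k = x.1 ∧ colD k = x.2) ?_
    exact (cp_and (cp_eq_nat (c_eD.comp Computable.snd) (Computable.fst.comp Computable.fst))
      (cp_eq_bool (c_colD.comp Computable.snd) (Computable.snd.comp Computable.fst))).to_re
  · have e1 : Computable fun y : ((ℕ × Bool) × BC) × ℕ => y.1.1 :=
      Computable.fst.comp Computable.fst
    have e2 : Computable fun y : ((ℕ × Bool) × BC) × ℕ => y.1.2 :=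
      Computable.snd.comp Computable.fst
    have e3 : Computable fun y : ((ℕ × Bool) × BC) × ℕ => y.2 := Computable.snd
    have hnet := cp_netPA (Computable.fst.comp e1) e2 e3
    have hno : ComputablePred fun y : ((ℕ × Bool) × BC) × ℕ => ∀ k < y.2, ¬ eD k = y.1.1.1 := by
      refine cp_forall_lt (P := fun (y : ((ℕ × Bool) × BC) × ℕ) k => ¬ eD k = y.1.1.1) e3 ?_
      exact (cp_eq_nat (c_eD.comp Computable.snd)
        (Computable.fst.comp (e1.comp Computable.fst))).not
    have hdec : ComputablePred fun y : ((ℕ × Bool) × BC) × ℕ =>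
        y.1.1.2 = false ∧ (∀ k < y.2, ¬ eD k = y.1.1.1) ∧
          NetFar (fun j _ => PA y.1.1.1 y.2 j) y.1.2 y.2 :=
      cp_and (cp_eq_bool (Computable.snd.comp e1) (Computable.const false)) (cp_and hno hnet)
    have hre := re_and (re_comp hcomp e2) hdec.to_re
    exact re_exists (R := fun (x : ℕ × Bool) (c : BC) => ∃ s, (ff (1, y) ∈ ballOfCode c) ∧
        (x.2 = false ∧ (∀ k < s, ¬ eD k = x.1) ∧ NetFar (fun j _ => PA x.1 s j) c s))
      (re_exists (R := fun (x : (ℕ × Bool) × BC) s => (ff (1, y) ∈ ballOfCode x.2) ∧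
        (x.1.2 = false ∧ (∀ k < s, ¬ eD k = x.1.1) ∧ NetFar (fun j _ => PA x.1.1 s j) x.2 s)) hre)

theorem QQ_no_computable : ∀ x ∈ QQ, ¬ IsComputablePoint x := by
  rintro _ ⟨p, hp, rfl⟩
  rcases lt_or_eq_of_le hp.1.2 with h | h
  · exact hair_not_computable hp h
  · have : p = (1, p.2) := Prod.ext h rfl
    rw [this]
    exact apex_not_computable hp.2

end Apex
end Fan

theorem exists_contractible_pi01_subset_of_unit_square_without_computable_points :
    ∃ Q : Set (ℝ × ℝ), Q.Nonempty ∧ IsPi01Closed Q ∧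
      Q ⊆ Set.Icc (0:ℝ) 1 ×ˢ Set.Icc (0:ℝ) 1 ∧ ContractibleSpace ↥Q ∧
      ∀ x ∈ Q, ¬ IsComputablePoint x := by
  exact ⟨Fan.QQ, Fan.QQ_nonempty, Fan.QQ_pi01, Fan.QQ_sub, Fan.QQ_contractible,
    Fan.QQ_no_computable⟩
end

section
/- Let f : ℕ → ℕ be strictly increasing with f(0) = 0. For α ∈ 2^ℕ define ι_f(α) ∈ 2^ℕ as the infinite concatenation, over i = 0, 1, 2, …, of the finite blocks (α(i), α(f(i)), α(f(i)+1), …, α(f(i+1)−1)), and define r : 2^ℕ → ℝ by r(β) = Σ_{i∈ℕ} β(i)·2^{−(i+1)}. Then the map α ↦ r(ι_f(α)) from 2^ℕ to ℝ is injective. -/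
open Set Metric

/-- The `i`-th block of `ι_f(α)`: `α(i)` followed by `α(f(i)), …, α(f(i+1)-1)`. -/
def blockList (f : ℕ → ℕ) (a : ℕ → Bool) (i : ℕ) : List Bool :=
  a i :: (List.range (f (i + 1) - f i)).map (fun j => a (f i + j))

/-- The infinite concatenation of the blocks `blockList f a 0, blockList f a 1, …`
(each block is nonempty, so the first `n + 1` blocks determine entry `n`). -/
def iotaMap (f : ℕ → ℕ) (a : ℕ → Bool) : ℕ → Bool :=
  fun n => (((List.range (n + 1)).map (blockList f a)).flatten).getD n false

/-- `r(β) = Σ_i β(i)·2^{-(i+1)}`. -/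
noncomputable def rCantor (b : ℕ → Bool) : ℝ :=
  ∑' i : ℕ, (if b i then (1:ℝ) else 0) * 2 ^ (-((i : ℤ) + 1))

theorem flat_spec (f : ℕ → ℕ) (hmono : StrictMono f) (h0 : f 0 = 0) (a : ℕ → Bool) (m : ℕ) :
    (((List.range m).map (blockList f a)).flatten).length = m + f m ∧
    ∀ i < m, (((List.range m).map (blockList f a)).flatten).getD (i + f i) false = a i ∧
      ∀ n, f i ≤ n → n < f (i + 1) →
        (((List.range m).map (blockList f a)).flatten).getD (i + 1 + n) false = a n := by
  induction m with
  | zero => simp [h0]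
  | succ m ih =>
    obtain ⟨hl, ih⟩ := ih
    have hm : f m < f (m + 1) := hmono (Nat.lt_succ_self m)
    rw [List.range_succ, List.map_append, List.flatten_append]
    have hb : (List.map (blockList f a) [m]).flatten = blockList f a m := by simp
    rw [hb]
    refine ⟨?_, ?_⟩
    · rw [List.length_append, hl]
      simp [blockList]
      omega
    · intro i hi
      rcases Nat.lt_succ_iff_lt_or_eq.mp hi with hi | rfl
      · have h1 : f i < f m := hmono hi
        have h2 : f (i + 1) ≤ f m := hmono.monotone hi
        refine ⟨?_, fun n hn hn' => ?_⟩
        · rw [List.getD_append _ _ _ _ (by omega)]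
          exact (ih i hi).1
        · rw [List.getD_append _ _ _ _ (by omega)]
          exact (ih i hi).2 n hn hn'
      · refine ⟨?_, fun n hn hn' => ?_⟩
        · rw [List.getD_append_right _ _ _ _ (by omega), hl]
          simp [blockList]
        · rw [List.getD_append_right _ _ _ _ (by omega), hl]
          have : i + 1 + n - (i + f i) = (n - f i) + 1 := by omega
          rw [this, blockList, List.getD_cons_succ, List.getD_eq_getElem _ _ (by simp; omega)]
          simp
          congr 1
          omega

theorem iota_head (f : ℕ → ℕ) (hmono : StrictMono f) (h0 : f 0 = 0) (a : ℕ → Bool) (i : ℕ) :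
    iotaMap f a (i + f i) = a i :=
  ((flat_spec f hmono h0 a (i + f i + 1)).2 i (by omega)).1

theorem iota_body (f : ℕ → ℕ) (hmono : StrictMono f) (h0 : f 0 = 0) (a : ℕ → Bool) (i n : ℕ)
    (h1 : f i ≤ n) (h2 : n < f (i + 1)) : iotaMap f a (i + 1 + n) = a n :=
  ((flat_spec f hmono h0 a (i + 1 + n + 1)).2 i (by omega)).2 n h1 h2

theorem exists_block (g : ℕ → ℕ) (hmono : StrictMono g) (h0 : g 0 = 0) (n : ℕ) :
    ∃ i, g i ≤ n ∧ n < g (i + 1) := by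
  induction n with
  | zero => exact ⟨0, by omega, by have := hmono (show 0 < 0 + 1 by omega); omega⟩
  | succ n ih =>
    obtain ⟨i, h1, h2⟩ := ih
    by_cases h : n + 1 < g (i + 1)
    · exact ⟨i, by omega, h⟩
    · have := hmono (show i + 1 < i + 1 + 1 by omega)
      exact ⟨i + 1, by omega, by omega⟩

theorem block_ne (f : ℕ → ℕ) (hmono : StrictMono f) (i n : ℕ)
    (h1 : f i ≤ n) (h2 : n < f (i + 1)) : f n ≠ i + 1 := by
  have hi : i ≤ f i := hmono.id_le i
  rcases Nat.lt_or_ge i n with h | h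
  · have := hmono.monotone (show i + 1 ≤ n from h)
    omega
  · have : n = i := by omega
    subst this
    omega

theorem two_occ (f : ℕ → ℕ) (hmono : StrictMono f) (h0 : f 0 = 0) (p : ℕ) :
    ∃ n q, q ≠ p ∧ ∀ a, iotaMap f a p = a n ∧ iotaMap f a q = a n := by
  obtain ⟨i, h1, h2⟩ := exists_block (fun i => i + f i)
    (fun x y h => by have := hmono h; simp only; omega) (by simp [h0]) p
  rcases h1.eq_or_lt with h | h
  · obtain ⟨j, h3, h4⟩ := exists_block f hmono h0 i
    have := block_ne f hmono j i h3 h4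
    refine ⟨i, j + 1 + i, by omega, fun a => ⟨?_, iota_body f hmono h0 a j i h3 h4⟩⟩
    rw [← h]
    exact iota_head f hmono h0 a i
  · obtain ⟨n, rfl⟩ : ∃ n, p = i + 1 + n := ⟨p - (i + 1), by omega⟩
    have := block_ne f hmono i n (by omega) (by omega)
    exact ⟨n, n + f n, by omega, fun a =>
      ⟨iota_body f hmono h0 a i n (by omega) (by omega), iota_head f hmono h0 a n⟩⟩

theorem r_term (i : ℕ) : (2:ℝ) ^ (-((i : ℤ) + 1)) = (1 / 2) ^ (i + 1) := by
  rw [zpow_neg, one_div, inv_pow]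
  norm_cast

theorem r_summable (b : ℕ → Bool) :
    Summable (fun i : ℕ => (if b i then (1:ℝ) else 0) * 2 ^ (-((i : ℤ) + 1))) := by
  have h : Summable (fun i : ℕ => ((1:ℝ) / 2) ^ (i + 1)) :=
    (summable_nat_add_iff 1).2 summable_geometric_two
  refine Summable.of_nonneg_of_le (fun i => ?_) (fun i => ?_) h
  · split_ifs <;> positivity
  · rw [r_term]
    split_ifs
    · simp
    · simp

theorem r_lt (b c : ℕ → Bool) (p q : ℕ) (hpq : p < q) (heq : ∀ i < p, b i = c i)
    (hbp : b p = true) (hcp : c p = false) (hbq : b q = true) (hcq : c q = false) :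
    rCantor c < rCantor b := by
  have hE : HasSum (fun i : ℕ => if i < p then (0:ℝ) else if i = p then (1 / 2) ^ (p + 1)
      else -(1 / 2) ^ (i + 1)) 0 := by
    rw [← hasSum_nat_add_iff' (p + 1)]
    have h1 := (hasSum_geometric_two.mul_left (-((1:ℝ) / 2) ^ (p + 2)))
    convert h1 using 1
    · rfl
    · funext i
      rw [if_neg (by omega), if_neg (by omega)]
      ring
    · rw [Finset.sum_range_succ, Finset.sum_eq_zero]
      · simp
        ring
      · intro i hi
        simp [Finset.mem_range.mp hi]
  have hd := (r_summable b).sub (r_summable c)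
  have key := Summable.tsum_lt_tsum (i := q) (f := fun i : ℕ => if i < p then (0:ℝ) else
      if i = p then (1 / 2) ^ (p + 1) else -(1 / 2) ^ (i + 1)) ?_ ?_ hE.summable hd
  · rw [hE.tsum_eq, (r_summable b).tsum_sub (r_summable c)] at key
    unfold rCantor
    linarith
  · intro i
    simp only [r_term]
    have hpos : (0:ℝ) < (1 / 2) ^ (i + 1) := by positivity
    rcases lt_trichotomy i p with h | h | h
    · simp [h, heq i h]
    · subst h
      simp [hbp, hcp]
    · rw [if_neg (by omega), if_neg (by omega)]
      split_ifs <;> linarith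
  · simp only [r_term]
    have hpos : (0:ℝ) < (1 / 2) ^ (q + 1) := by positivity
    rw [if_neg (by omega), if_neg (by omega), hbq, hcq]
    simp only [if_true, Bool.false_eq_true, if_false]
    linarith

theorem rCantor_comp_iotaMap_injective (f : ℕ → ℕ) (hmono : StrictMono f) (h0 : f 0 = 0) :
    Function.Injective (fun a : ℕ → Bool => rCantor (iotaMap f a)) := by
  intro a b hab
  simp only at hab
  by_contra hne
  have hex : ∃ p, iotaMap f a p ≠ iotaMap f b p := by
    obtain ⟨n, hn⟩ := Function.ne_iff.mp hne
    exact ⟨n + f n, by rwa [iota_head f hmono h0, iota_head f hmono h0]⟩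
  classical
  have hp := Nat.find_spec hex
  have hmin : ∀ i < Nat.find hex, iotaMap f a i = iotaMap f b i :=
    fun i hi => not_not.mp (Nat.find_min hex hi)
  generalize Nat.find hex = p at hp hmin
  obtain ⟨n, q, hqp, hocc⟩ := two_occ f hmono h0 p
  obtain ⟨ha1, ha2⟩ := hocc a
  obtain ⟨hb1, hb2⟩ := hocc b
  rw [ha1, hb1] at hp
  have hpq : p < q := by
    by_contra h
    have := hmin q (by omega)
    rw [ha2, hb2] at this
    exact hp this
  cases hA : a n <;> cases hB : b n <;> rw [hA] at ha1 ha2 <;> rw [hB] at hb1 hb2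
  · exact hp (hA.trans hB.symm)
  · exact (r_lt _ _ p q hpq (fun i hi => (hmin i hi).symm) hb1 ha1 hb2 ha2).ne hab
  · exact (r_lt _ _ p q hpq hmin ha1 hb1 ha2 hb2).ne hab.symm
  · exact hp (hA.trans hB.symm)
end

section
/- Let H ⊆ ℝ² be the harmonic comb, the topological closure of ({1/(n+1) : n ∈ ℕ} × [0,1]) ∪ ([0,1] × {0}). Then H is a dendroid, H is not a dendrite, and the subspace H is contractible. -/
open Set Metric

/-- The harmonic comb. -/
def harmonicComb : Set (ℝ × ℝ) :=
  closure (({x : ℝ | ∃ n : ℕ, x = 1 / (n + 1)} ×ˢ Set.Icc (0:ℝ) 1) ∪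
    (Set.Icc (0:ℝ) 1 ×ˢ ({0} : Set ℝ)))


open Filter Topology

/-- The base points of the teeth. -/
def combK : Set ℝ := insert 0 (range fun n : ℕ => (1:ℝ) / (n + 1))

/-- Explicit description of the comb. -/
def combH : Set (ℝ × ℝ) :=
  {p | p.1 ∈ Icc (0:ℝ) 1 ∧ p.2 ∈ Icc (0:ℝ) 1 ∧ (p.2 = 0 ∨ p.1 ∈ combK)}

lemma combK_compact : IsCompact combK :=
  (tendsto_one_div_add_atTop_nhds_zero_nat (𝕜 := ℝ)).isCompact_insert_range

lemma combK_countable : combK.Countable := (countable_range _).insert _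

lemma combK_dense : Dense combKᶜ := combK_countable.dense_compl ℝ

lemma combK_sub : combK ⊆ Icc (0:ℝ) 1 := by
  rintro x (rfl | ⟨n, rfl⟩)
  · simp
  · refine ⟨by positivity, ?_⟩
    have : (0:ℝ) ≤ n := n.cast_nonneg
    show (1:ℝ) / (n + 1) ≤ 1
    rw [div_le_one (by positivity)]
    linarith

lemma combH_closed : IsClosed combH := by
  have h1 : IsClosed {p : ℝ × ℝ | p.1 ∈ Icc (0:ℝ) 1} := isClosed_Icc.preimage continuous_fst
  have h2 : IsClosed {p : ℝ × ℝ | p.2 ∈ Icc (0:ℝ) 1} := isClosed_Icc.preimage continuous_snd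
  have h3 : IsClosed {p : ℝ × ℝ | p.2 = 0} := isClosed_eq continuous_snd continuous_const
  have h4 : IsClosed {p : ℝ × ℝ | p.1 ∈ combK} :=
    combK_compact.isClosed.preimage continuous_fst
  exact h1.inter (h2.inter (h3.union h4))

lemma combH_compact : IsCompact combH := by
  refine (isCompact_Icc.prod isCompact_Icc : IsCompact (Icc (0:ℝ) 1 ×ˢ Icc (0:ℝ) 1)).of_isClosed_subset
    combH_closed ?_
  intro p hp
  exact ⟨hp.1, hp.2.1⟩

lemma harmonicComb_eq : harmonicComb = combH := by
  unfold harmonicComb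
  apply Subset.antisymm
  · refine closure_minimal ?_ combH_closed
    rintro ⟨x, y⟩ (⟨⟨n, hn⟩, hy⟩ | ⟨hx, hy⟩)
    · have hK : x ∈ combK := Or.inr ⟨n, hn.symm⟩
      exact ⟨combK_sub hK, hy, Or.inr hK⟩
    · have hy : y = 0 := hy
      subst hy
      exact ⟨hx, by simp, Or.inl rfl⟩
  · rintro ⟨x, y⟩ ⟨hx, hy, h0 | (h0 | ⟨n, hn⟩)⟩
    · exact subset_closure (Or.inr ⟨hx, h0⟩)
    · dsimp only at h0
      subst h0
      have : Tendsto (fun n : ℕ => ((1:ℝ) / (n + 1), y)) atTop (𝓝 ((0:ℝ), y)) :=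
        (tendsto_one_div_add_atTop_nhds_zero_nat (𝕜 := ℝ)).prodMk_nhds tendsto_const_nhds
      refine mem_closure_of_tendsto this (Eventually.of_forall fun n => Or.inl ⟨⟨n, rfl⟩, hy⟩)
    · exact subset_closure (Or.inl ⟨⟨n, hn.symm⟩, hy⟩)

lemma combH_contractible : ContractibleSpace combH := by
  rw [contractible_iff_id_nullhomotopic]
  refine ⟨⟨(0, 0), by simp [combH]⟩, ⟨⟨⟨fun z =>
    ⟨(z.2.1.1 * min 1 (2 - 2 * (z.1:ℝ)), z.2.1.2 * max 0 (1 - 2 * (z.1:ℝ))), ?_⟩, ?_⟩, ?_, ?_⟩⟩⟩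
  · obtain ⟨⟨t, ht0, ht1⟩, ⟨⟨x, y⟩, ⟨hx0, hx1⟩, ⟨hy0, hy1⟩, h⟩⟩ := z
    dsimp only at *
    have a1 : min 1 (2 - 2 * t) ≤ 1 := min_le_left _ _
    have a0 : 0 ≤ min 1 (2 - 2 * t) := le_min (by norm_num) (by linarith)
    have b0 : 0 ≤ max 0 (1 - 2 * t) := le_max_left _ _
    have b1 : max 0 (1 - 2 * t) ≤ 1 := max_le (by norm_num) (by linarith)
    refine ⟨⟨by positivity, by show _ * _ ≤ _; nlinarith⟩, ⟨by positivity, by show _ * _ ≤ _; nlinarith⟩, ?_⟩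
    show y * _ = 0 ∨ x * _ ∈ combK
    rcases h with h | h
    · left; exact mul_eq_zero_of_left h _
    · rcases le_total t (1/2) with h' | h'
      · right; rw [min_eq_left (by linarith), mul_one]; exact h
      · left; rw [max_eq_left (by linarith), mul_zero]
  · apply Continuous.subtype_mk
    fun_prop
  · rintro ⟨⟨x, y⟩, h⟩
    ext <;> simp
  · rintro ⟨⟨x, y⟩, h⟩
    ext <;> simp

/-- Vertical convexity of subcontinua. -/
lemma comb_vert {C : Set (ℝ × ℝ)} (hC : C ⊆ combH) (hcl : IsClosed C) (hc : IsPreconnected C)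
    {a b b' r : ℝ} (h1 : (a, b) ∈ C) (h2 : (a, b') ∈ C) (hr : b ≤ r) (hr' : r ≤ b') :
    (a, r) ∈ C := by
  by_contra hn
  have hbr : b < r := lt_of_le_of_ne hr (by rintro rfl; exact hn h1)
  have hbr' : r < b' := lt_of_le_of_ne hr' (by rintro rfl; exact hn h2)
  have hb0 : 0 ≤ b := (hC h1).2.1.1
  obtain ⟨ε, hε, hball⟩ := Metric.isOpen_iff.1 hcl.isOpen_compl (a, r) hn
  obtain ⟨u, huK, hu1, hu2⟩ := combK_dense.exists_between (show a - ε < a by linarith)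
  obtain ⟨v, hvK, hv1, hv2⟩ := combK_dense.exists_between (show a < a + ε by linarith)
  have oU : IsOpen {p : ℝ × ℝ | u < p.1 ∧ p.1 < v ∧ r < p.2} :=
    (isOpen_lt continuous_const continuous_fst).inter
      ((isOpen_lt continuous_fst continuous_const).inter
        (isOpen_lt continuous_const continuous_snd))
  have oV : IsOpen {p : ℝ × ℝ | p.1 < u ∨ v < p.1 ∨ p.2 < r} :=
    (isOpen_lt continuous_fst continuous_const).union
      ((isOpen_lt continuous_const continuous_fst).union
        (isOpen_lt continuous_snd continuous_const))
  have hsub : C ⊆ {p : ℝ × ℝ | u < p.1 ∧ p.1 < v ∧ r < p.2} ∪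
      {p : ℝ × ℝ | p.1 < u ∨ v < p.1 ∨ p.2 < r} := by
    rintro ⟨x, y⟩ hxy
    by_contra hcon
    simp only [mem_union, mem_setOf_eq, not_or, not_lt, not_and] at hcon
    obtain ⟨hc1, hc2, hc3, hc4⟩ := hcon
    have hy : y ≠ 0 := by
      intro h0; linarith
    have hxK : x ∈ combK := (hC hxy).2.2.resolve_left hy
    have hux : u < x := lt_of_le_of_ne hc2 (by rintro rfl; exact huK hxK)
    have hxv : x < v := lt_of_le_of_ne hc3 (by rintro rfl; exact hvK hxK)
    have hyr : y = r := le_antisymm (hc1 hux hxv) hc4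
    refine hball ?_ hxy
    rw [Metric.mem_ball, Prod.dist_eq, hyr, dist_self, Real.dist_eq]
    refine max_lt (abs_lt.2 ⟨?_, ?_⟩) hε <;> dsimp only <;> linarith
  obtain ⟨z, -, ⟨hz1, hz2, hz3⟩, hz⟩ := hc _ _ oU oV hsub ⟨_, h2, hu2, hv1, hbr'⟩
    ⟨_, h1, Or.inr (Or.inr hbr)⟩
  rcases hz with hz | hz | hz <;> linarith

/-- Horizontal convexity of subcontinua. -/
lemma comb_horiz {C : Set (ℝ × ℝ)} (hC : C ⊆ combH) (hcl : IsClosed C) (hc : IsPreconnected C)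
    {p q : ℝ × ℝ} (h1 : p ∈ C) (h2 : q ∈ C) (hpq : p.1 < q.1) {c : ℝ} (hc1 : c ∈ Icc p.1 q.1) :
    (c, (0:ℝ)) ∈ C := by
  have key : ∀ d ∈ Ioo p.1 q.1 ∩ combKᶜ, (d, (0:ℝ)) ∈ C := by
    rintro d ⟨⟨hd1, hd2⟩, hdK⟩
    by_contra hn
    have oU : IsOpen {z : ℝ × ℝ | z.1 < d} := isOpen_lt continuous_fst continuous_const
    have oV : IsOpen {z : ℝ × ℝ | d < z.1} := isOpen_lt continuous_const continuous_fst
    have hsub : C ⊆ {z : ℝ × ℝ | z.1 < d} ∪ {z : ℝ × ℝ | d < z.1} := by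
      rintro ⟨x, y⟩ hxy
      rcases lt_trichotomy x d with h | h | h
      · exact Or.inl h
      · exfalso
        subst h
        rcases (hC hxy).2.2 with h0 | h0
        · dsimp only at h0
          subst h0
          exact hn hxy
        · exact hdK h0
      · exact Or.inr h
    obtain ⟨z, -, hz1, hz2⟩ := hc _ _ oU oV hsub ⟨_, h1, hd1⟩ ⟨_, h2, hd2⟩
    exact lt_asymm (show z.1 < d from hz1) hz2
  have hcl' : IsClosed {d : ℝ | (d, (0:ℝ)) ∈ C} :=
    hcl.preimage (by fun_prop : Continuous fun d : ℝ => (d, (0:ℝ)))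
  have h3 : closure (Ioo p.1 q.1 ∩ combKᶜ) ⊆ {d : ℝ | (d, (0:ℝ)) ∈ C} :=
    closure_minimal key hcl'
  apply h3
  have h4 := combK_dense.open_subset_closure_inter (isOpen_Ioo (a := p.1) (b := q.1))
  have h5 := closure_minimal h4 isClosed_closure
  rw [closure_Ioo hpq.ne] at h5
  exact h5 hc1

lemma comb_vert_sub {C : Set (ℝ × ℝ)} (hC : C ⊆ combH) (hcl : IsClosed C) (hc : IsPreconnected C)
    {p q : ℝ × ℝ} (h1 : p ∈ C) (h2 : q ∈ C) (h : p.1 = q.1) :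
    ({p.1} : Set ℝ) ×ˢ uIcc p.2 q.2 ⊆ C := by
  rintro ⟨x, y⟩ ⟨hx, hy⟩
  have hx : x = p.1 := hx
  subst hx
  have h2' : (p.1, q.2) ∈ C := by rw [h]; exact h2
  rcases mem_uIcc.1 hy with hy | hy
  · exact comb_vert hC hcl hc h1 h2' hy.1 hy.2
  · exact comb_vert hC hcl hc h2' h1 hy.1 hy.2

lemma comb_vert_conn (a b c : ℝ) : IsPreconnected (({a} : Set ℝ) ×ˢ uIcc b c) :=
  isPreconnected_singleton.prod isPreconnected_uIcc

lemma comb_inter_aux {A B : Set (ℝ × ℝ)} (hA : A ⊆ combH) (hB : B ⊆ combH) (cA : IsClosed A)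
    (cB : IsClosed B) (pA : IsPreconnected A) (pB : IsPreconnected B) {p q : ℝ × ℝ}
    (hp : p ∈ A ∩ B) (hq : q ∈ A ∩ B) (hpq : p.1 < q.1) :
    ∃ t ⊆ A ∩ B, p ∈ t ∧ q ∈ t ∧ IsPreconnected t := by
  have hAB : ∀ c ∈ Icc p.1 q.1, (c, (0:ℝ)) ∈ A ∩ B := fun c hc =>
    ⟨comb_horiz hA cA pA hp.1 hq.1 hpq hc, comb_horiz hB cB pB hp.2 hq.2 hpq hc⟩
  have hp0 := hAB p.1 ⟨le_rfl, hpq.le⟩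
  have hq0 := hAB q.1 ⟨hpq.le, le_rfl⟩
  refine ⟨(({p.1} : Set ℝ) ×ˢ uIcc p.2 0 ∪ Icc p.1 q.1 ×ˢ {(0:ℝ)}) ∪
    ({q.1} : Set ℝ) ×ˢ uIcc q.2 0, ?_, ?_, ?_, ?_⟩
  · refine union_subset (union_subset ?_ ?_) ?_
    · exact subset_inter (comb_vert_sub hA cA pA hp.1 hp0.1 rfl)
        (comb_vert_sub hB cB pB hp.2 hp0.2 rfl)
    · rintro ⟨x, y⟩ ⟨hx, hy⟩
      have hy : y = 0 := hy
      subst hy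
      exact hAB x hx
    · exact subset_inter (comb_vert_sub hA cA pA hq.1 hq0.1 rfl)
        (comb_vert_sub hB cB pB hq.2 hq0.2 rfl)
  · exact Or.inl (Or.inl ⟨rfl, left_mem_uIcc⟩)
  · exact Or.inr ⟨rfl, left_mem_uIcc⟩
  · refine IsPreconnected.union (q.1, (0:ℝ)) (Or.inr ⟨⟨hpq.le, le_rfl⟩, rfl⟩)
      ⟨rfl, right_mem_uIcc⟩ ?_ (comb_vert_conn _ _ _)
    exact IsPreconnected.union (p.1, (0:ℝ)) ⟨rfl, right_mem_uIcc⟩ ⟨⟨le_rfl, hpq.le⟩, rfl⟩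
      (comb_vert_conn _ _ _) (isPreconnected_Icc.prod isPreconnected_singleton)

lemma comb_inter {A B : Set (ℝ × ℝ)} (hA : A ⊆ combH) (hB : B ⊆ combH) (cA : IsClosed A)
    (cB : IsClosed B) (pA : IsPreconnected A) (pB : IsPreconnected B) :
    IsPreconnected (A ∩ B) := by
  apply isPreconnected_of_forall_pair
  intro p hp q hq
  rcases lt_trichotomy p.1 q.1 with h | h | h
  · exact comb_inter_aux hA hB cA cB pA pB hp hq h
  · refine ⟨({p.1} : Set ℝ) ×ˢ uIcc p.2 q.2, ?_, ⟨rfl, left_mem_uIcc⟩, ⟨h.symm, right_mem_uIcc⟩,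
      comb_vert_conn _ _ _⟩
    exact subset_inter (comb_vert_sub hA cA pA hp.1 hq.1 h) (comb_vert_sub hB cB pB hp.2 hq.2 h)
  · obtain ⟨t, h1, h2, h3, h4⟩ := comb_inter_aux hA hB cA cB pA pB hq hp h
    exact ⟨t, h1, h3, h2, h4⟩

lemma combH_hered : HereditarilyUnicoherent combH := by
  intro Y hY hYc A B hA hB cA cB pA pB hAB
  refine ⟨?_, comb_inter (hA.trans hY) (hB.trans hY) cA cB pA.isPreconnected pB.isPreconnected⟩
  have h := isPreconnected_closed_iff.1 hYc.2.isPreconnected A B cA cB hAB.ge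
  obtain ⟨a, ha⟩ := pA.nonempty
  obtain ⟨b, hb⟩ := pB.nonempty
  obtain ⟨z, -, hz⟩ := h ⟨a, hA ha, ha⟩ ⟨b, hB hb, hb⟩
  exact ⟨z, hz⟩

lemma combH_arcwise : ArcwiseConnectedSet combH := by
  rintro ⟨a, b⟩ ⟨⟨ha0, ha1⟩, ⟨hb0, hb1⟩, h⟩ ⟨a', b'⟩ ⟨⟨ha0', ha1'⟩, ⟨hb0', hb1'⟩, h'⟩ hne
  dsimp only at *
  by_cases haa : a = a'
  · subst haa
    have hbb : b' - b ≠ 0 := by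
      intro h0
      apply hne
      rw [show b = b' by linarith]
    have hK : a ∈ combK := by
      rcases h with h | h
      · rcases h' with h' | h'
        · exact absurd (by rw [h, h', sub_zero]) hbb
        · exact h'
      · exact h
    refine ⟨_, ?_, fun t => (a, b + t * (b' - b)), by fun_prop, ?_, rfl, by simp, by simp⟩
    · rintro _ ⟨⟨t, ht0, ht1⟩, rfl⟩
      refine ⟨⟨ha0, ha1⟩, ⟨?_, ?_⟩, Or.inr hK⟩ <;> dsimp only <;> nlinarith
    · intro s t hst
      simp only [Prod.mk.injEq, true_and, add_right_inj] at hst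
      exact Subtype.ext (mul_right_cancel₀ hbb hst)
  · have hd : a' - a ≠ 0 := fun h0 => haa (by linarith)
    refine ⟨_, ?_, fun t => (a + max 0 (min 1 ((t:ℝ) * (b + 1 + b') - b)) * (a' - a),
      max 0 (max (b - (t:ℝ) * (b + 1 + b')) ((t:ℝ) * (b + 1 + b') - b - 1))),
      by fun_prop, ?_, rfl, ?_, ?_⟩
    · rintro _ ⟨⟨t, ht0, ht1⟩, rfl⟩
      dsimp only
      have hs0 : 0 ≤ t * (b + 1 + b') := by positivity
      have hs1 : t * (b + 1 + b') ≤ b + 1 + b' := by nlinarith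
      generalize t * (b + 1 + b') = s at *
      have hm0 : 0 ≤ max 0 (min 1 (s - b)) := le_max_left _ _
      have hm1 : max 0 (min 1 (s - b)) ≤ 1 := max_le zero_le_one (min_le_left _ _)
      refine ⟨⟨?_, ?_⟩, ⟨le_max_left _ _, ?_⟩, ?_⟩
      · dsimp only; nlinarith
      · dsimp only; nlinarith
      · exact max_le zero_le_one (max_le (by linarith) (by linarith))
      · dsimp only
        rcases lt_or_ge s b with h1 | h1
        · right
          have hK := h.resolve_left (by linarith)
          rw [min_eq_right (by linarith), max_eq_left (by linarith)]
          simpa using hK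
        · rcases le_or_gt s (b + 1) with h2 | h2
          · left
            exact max_eq_left (max_le (by linarith) (by linarith))
          · right
            have hK := h'.resolve_left (by linarith)
            rw [min_eq_left (by linarith), max_eq_right (by linarith)]
            simpa using hK
    · rintro ⟨s, hs0, hs1⟩ ⟨t, ht0, ht1⟩ hst
      simp only [Prod.mk.injEq, add_right_inj] at hst
      obtain ⟨e1, e2⟩ := hst
      have e1 := mul_right_cancel₀ hd e1
      have hL : b + 1 + b' ≠ 0 := by positivity
      apply Subtype.ext
      show s = t
      apply mul_right_cancel₀ hL
      generalize s * (b + 1 + b') = x at *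
      generalize t * (b + 1 + b') = y at *
      grind
    · simp [hb0]
      linarith
    · dsimp only
      rw [one_mul, min_eq_left (by linarith), max_eq_right (by linarith)]
      rw [show b + 1 + b' - b - 1 = b' by ring, max_eq_right (a := b - _) (by linarith),
        max_eq_right hb0']
      simp

lemma combH_not_lc : ¬ LocallyConnectedSpace combH := by
  intro hlc
  have h0 : ((0:ℝ), (1:ℝ)) ∈ combH := ⟨by simp, by simp, Or.inr (Or.inl rfl)⟩
  have hU : IsOpen {z : combH | (0:ℝ) < z.1.2} := isOpen_lt continuous_const (by fun_prop)
  obtain ⟨V, hVU, hVo, hV0, hVc⟩ :=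
    locallyConnectedSpace_iff_subsets_isOpen_isConnected.1 hlc ⟨(0, 1), h0⟩ _
      (hU.mem_nhds (by simp))
  have hK : ∀ n : ℕ, (1:ℝ) / (n + 1) ∈ combK := fun n => Or.inr ⟨n, rfl⟩
  let f : ℕ → combH := fun n => ⟨((1:ℝ) / (n + 1), 1), combK_sub (hK n), by simp, Or.inr (hK n)⟩
  have hf : Tendsto f atTop (𝓝 ⟨(0, 1), h0⟩) := by
    rw [tendsto_subtype_rng]
    exact (tendsto_one_div_add_atTop_nhds_zero_nat (𝕜 := ℝ)).prodMk_nhds tendsto_const_nhds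
  obtain ⟨n, hn⟩ := (hf.eventually (hVo.mem_nhds hV0)).exists
  have hW : IsPreconnected ((fun z : combH => z.1.1) '' V) :=
    hVc.isPreconnected.image _ (by fun_prop)
  have hWK : (fun z : combH => z.1.1) '' V ⊆ combK := by
    rintro _ ⟨z, hz, rfl⟩
    have h1 : (0:ℝ) < z.1.2 := hVU hz
    exact z.2.2.2.resolve_left h1.ne'
  have hI : Icc (0:ℝ) (1 / (n + 1)) ⊆ combK :=
    (hW.Icc_subset ⟨_, hV0, rfl⟩ ⟨_, hn, rfl⟩).trans hWK
  obtain ⟨c, hc, hc1, hc2⟩ := combK_dense.exists_between (show (0:ℝ) < 1 / (n + 1) by positivity)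
  exact hc (hI ⟨hc1.le, hc2.le⟩)

theorem harmonicComb_dendroid_not_dendrite_contractible :
    IsDendroid harmonicComb ∧ ¬ IsDendrite harmonicComb ∧
      ContractibleSpace ↥harmonicComb := by
  rw [harmonicComb_eq]
  have hcon := combH_contractible
  refine ⟨⟨⟨combH_compact, ?_⟩, combH_arcwise, combH_hered⟩, fun h => combH_not_lc h.2.1, hcon⟩
  exact isConnected_iff_connectedSpace.2 inferInstance
end
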